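/- arXiv:1406.7545 — 4 statements merged into one kernel-verified Lean document; each statement's English description precedes it below -/
import Mathlib

section
/- Let N be a positive integer and δ₀ ∈ (0,1). There exists a constant c₀ > 0, depending only on N and δ₀, such that for all s, t with 0 < s < t < 1 and t − s ≥ δ₀, and every measurable set E ⊆ ℝ^N with |E| < ∞ and P_t(E) < ∞, one has F_{s,t}(E) ≥ (1−t)·P_t(E)/2 − c₀·|E|. -/
open MeasureTheory ENNReal

/-- Interaction energy `∫_A ∫_B |x-y|^{-(N+α)} dy dx` in `[0,∞]`. -/
noncomputable def interEnergy (N : ℕ) (α : ℝ)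
    (A B : Set (EuclideanSpace ℝ (Fin N))) : ℝ≥0∞ :=
  ∫⁻ x in A, ∫⁻ y in B, ENNReal.ofReal (‖x - y‖ ^ (-((N : ℝ) + α))) ∂volume ∂volume

/-- The fractional `α`-perimeter `P_α(E) = ∫_E ∫_{Eᶜ} |x-y|^{-(N+α)} dy dx`. -/
noncomputable def fracPer (N : ℕ) (α : ℝ) (E : Set (EuclideanSpace ℝ (Fin N))) : ℝ≥0∞ :=
  interEnergy N α E Eᶜ

/-- The free energy `F_{s,t}(E) = (1-t) P_t(E) - s P_s(E)`. -/
noncomputable def freeEnergy (N : ℕ) (s t : ℝ) (E : Set (EuclideanSpace ℝ (Fin N))) : ℝ :=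
  (1 - t) * (fracPer N t E).toReal - s * (fracPer N s E).toReal

noncomputable def gg {N : ℕ} (E : Set (EuclideanSpace ℝ (Fin N)))
    (h : EuclideanSpace ℝ (Fin N)) : ℝ≥0∞ :=
  volume (E ∩ (fun x => x + h) ⁻¹' Eᶜ)

noncomputable def KK {N : ℕ} (α : ℝ) (h : EuclideanSpace ℝ (Fin N)) : ℝ≥0∞ :=
  ENNReal.ofReal (‖h‖ ^ (-((N : ℝ) + α)))

lemma KK_meas {N : ℕ} (α : ℝ) : Measurable (KK (N := N) α) := by
  unfold KK
  fun_prop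

lemma gg_meas {N : ℕ} {E : Set (EuclideanSpace ℝ (Fin N))} (hE : MeasurableSet E) :
    Measurable (gg E) := by
  have hm : MeasurableSet {p : EuclideanSpace ℝ (Fin N) × EuclideanSpace ℝ (Fin N) |
      p.2 ∈ E ∧ p.2 + p.1 ∈ Eᶜ} := by
    apply MeasurableSet.inter
    · exact measurable_snd hE
    · exact (measurable_snd.add measurable_fst) hE.compl
  exact measurable_measure_prodMk_left (ν := volume) hm

lemma gg_le {N : ℕ} (E : Set (EuclideanSpace ℝ (Fin N))) (h) : gg E h ≤ volume E :=
  measure_mono Set.inter_subset_left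

lemma gg_two {N : ℕ} (E : Set (EuclideanSpace ℝ (Fin N))) (h) :
    gg E ((2 : ℝ) • h) ≤ 2 * gg E h := by
  have h1 : E ∩ (fun x => x + (2 : ℝ) • h) ⁻¹' Eᶜ ⊆
      (E ∩ (fun x => x + h) ⁻¹' Eᶜ) ∪
        (fun x => x + h) ⁻¹' (E ∩ (fun x => x + h) ⁻¹' Eᶜ) := by
    rintro x ⟨hx, hx2⟩
    by_cases hh : x + h ∈ E
    · right
      refine ⟨hh, ?_⟩
      have : x + h + h = x + (2 : ℝ) • h := by rw [two_smul, add_assoc]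
      simpa [this] using hx2
    · left
      exact ⟨hx, hh⟩
  calc gg E ((2 : ℝ) • h) ≤ _ := measure_mono h1
    _ ≤ _ := measure_union_le _ _
    _ = 2 * gg E h := by
      rw [measure_preimage_add_right, two_mul]
      rfl

lemma fracPer_eq {N : ℕ} (α : ℝ) {E : Set (EuclideanSpace ℝ (Fin N))} (hE : MeasurableSet E) :
    fracPer N α E = ∫⁻ h, gg E h * KK α h := by
  have h1 : ∀ x, (∫⁻ y in Eᶜ, ENNReal.ofReal (‖x - y‖ ^ (-((N : ℝ) + α))) ∂volume)
      = ∫⁻ h, Eᶜ.indicator 1 (x + h) * KK α h := by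
    intro x
    rw [← lintegral_indicator hE.compl, ← lintegral_add_left_eq_self _ x]
    congr 1
    ext h
    by_cases hh : x + h ∈ Eᶜ
    · rw [Set.indicator_of_mem hh, Set.indicator_of_mem hh]
      simp [KK]
    · rw [Set.indicator_of_notMem hh, Set.indicator_of_notMem hh]
      simp
  unfold fracPer interEnergy
  simp_rw [h1]
  rw [lintegral_lintegral_swap]
  · congr 1
    ext h
    rw [lintegral_mul_const]
    · congr 1
      have : (fun x => Eᶜ.indicator (1 : EuclideanSpace ℝ (Fin N) → ℝ≥0∞) (x + h))
          = ((fun x => x + h) ⁻¹' Eᶜ).indicator 1 := by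
        ext x
        rfl
      rw [this, lintegral_indicator_one ((measurable_add_const h) hE.compl),
        Measure.restrict_apply ((measurable_add_const h) hE.compl), Set.inter_comm]
      rfl
    · exact (measurable_one.indicator hE.compl).comp (measurable_add_const h)
  · apply Measurable.aemeasurable
    apply Measurable.mul
    · exact (measurable_one.indicator hE.compl).comp (measurable_fst.add measurable_snd)
    · exact (KK_meas α).comp measurable_snd

lemma lint_scale {N : ℕ} {f : EuclideanSpace ℝ (Fin N) → ℝ≥0∞} (hf : Measurable f) :
    ∫⁻ h, f h = ENNReal.ofReal (2 ^ N) * ∫⁻ h, f ((2 : ℝ) • h) := by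
  have := Measure.map_addHaar_smul (volume : Measure (EuclideanSpace ℝ (Fin N)))
    (r := 2) two_ne_zero
  rw [← lintegral_map hf (measurable_const_smul (2 : ℝ)), this, lintegral_smul_measure, smul_eq_mul,
    ← mul_assoc, ← ENNReal.ofReal_mul (by positivity)]
  have h2 : (2 : ℝ) ^ N * |(2 ^ Module.finrank ℝ (EuclideanSpace ℝ (Fin N)))⁻¹| = 1 := by
    rw [finrank_euclideanSpace_fin, abs_of_pos (by positivity)]
    exact mul_inv_cancel₀ (by positivity)
  rw [h2]
  simp

lemma KK_two {N : ℕ} (α : ℝ) (h : EuclideanSpace ℝ (Fin N)) :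
    KK α ((2 : ℝ) • h) = ENNReal.ofReal (2 ^ (-((N : ℝ) + α))) * KK α h := by
  unfold KK
  rw [norm_smul, Real.mul_rpow (by positivity) (by positivity),
    ENNReal.ofReal_mul (by positivity)]
  simp

lemma I_double {N : ℕ} (t : ℝ) {E : Set (EuclideanSpace ℝ (Fin N))}
    (hE : MeasurableSet E) (r : ℝ) :
    ∫⁻ h in Metric.closedBall 0 (2 * r), gg E h * KK t h ≤
      ENNReal.ofReal (2 ^ (1 - t)) * ∫⁻ h in Metric.closedBall 0 r, gg E h * KK t h := by
  have hm : Measurable (fun h => gg E h * KK t h) := (gg_meas hE).mul (KK_meas t)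
  rw [← lintegral_indicator Metric.isClosed_closedBall.measurableSet,
    ← lintegral_indicator Metric.isClosed_closedBall.measurableSet,
    lint_scale (hm.indicator Metric.isClosed_closedBall.measurableSet)]
  have key : ∀ h, (Metric.closedBall (0 : EuclideanSpace ℝ (Fin N)) (2 * r)).indicator
      (fun h => gg E h * KK t h) ((2 : ℝ) • h) ≤
      (2 * ENNReal.ofReal (2 ^ (-((N : ℝ) + t)))) *
        (Metric.closedBall (0 : EuclideanSpace ℝ (Fin N)) r).indicator
          (fun h => gg E h * KK t h) h := by
    intro h
    by_cases hh : h ∈ Metric.closedBall (0 : EuclideanSpace ℝ (Fin N)) r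
    · have h2 : (2 : ℝ) • h ∈ Metric.closedBall (0 : EuclideanSpace ℝ (Fin N)) (2 * r) := by
        simp [norm_smul] at hh ⊢
        exact hh
      rw [Set.indicator_of_mem hh, Set.indicator_of_mem h2, KK_two]
      calc gg E ((2 : ℝ) • h) * (ENNReal.ofReal (2 ^ (-((N : ℝ) + t))) * KK t h)
          ≤ (2 * gg E h) * (ENNReal.ofReal (2 ^ (-((N : ℝ) + t))) * KK t h) := by
            gcongr
            exact gg_two E h
        _ = _ := by ring
    · have h2 : (2 : ℝ) • h ∉ Metric.closedBall (0 : EuclideanSpace ℝ (Fin N)) (2 * r) := by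
        simp [norm_smul] at hh ⊢
        exact hh
      rw [Set.indicator_of_notMem h2]
      exact zero_le
  calc _ ≤ ENNReal.ofReal (2 ^ N) * ∫⁻ h, (2 * ENNReal.ofReal (2 ^ (-((N : ℝ) + t)))) *
        (Metric.closedBall (0 : EuclideanSpace ℝ (Fin N)) r).indicator
          (fun h => gg E h * KK t h) h := by
        gcongr with h
        exact key h
    _ = _ := by
      rw [lintegral_const_mul _ (hm.indicator Metric.isClosed_closedBall.measurableSet),
        ← mul_assoc]
      congr 1
      have : (2 : ℝ≥0∞) = ENNReal.ofReal 2 := by simp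
      rw [this, ← ENNReal.ofReal_mul (by positivity), ← ENNReal.ofReal_mul (by positivity)]
      congr 1
      have e1 : (2 : ℝ) ^ N = (2 : ℝ) ^ (N : ℝ) := (Real.rpow_natCast _ _).symm
      have e2 : (2 : ℝ) * 2 ^ (-((N : ℝ) + t)) = 2 ^ (1 + -((N : ℝ) + t)) := by
        rw [Real.rpow_add two_pos, Real.rpow_one]
      rw [e1, e2, ← Real.rpow_add two_pos]
      congr 1
      ring

def ann {N : ℕ} (r : ℝ) : Set (EuclideanSpace ℝ (Fin N)) := {h | r < ‖h‖ ∧ ‖h‖ ≤ 2 * r}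

lemma ann_meas {N : ℕ} (r : ℝ) : MeasurableSet (ann (N := N) r) :=
  (measurableSet_lt measurable_const measurable_norm).inter
    (measurableSet_le measurable_norm measurable_const)

lemma ann_le {N : ℕ} (t : ℝ) (ht0 : 0 < t) (ht : t < 1) {E : Set (EuclideanSpace ℝ (Fin N))}
    (hE : MeasurableSet E) (hP : fracPer N t E < ⊤) (r : ℝ) (hr : 0 < r) :
    ∫⁻ h in ann r, gg E h * KK t h ≤ ENNReal.ofReal (1 - t) * fracPer N t E := by
  have hI : ∫⁻ h in Metric.closedBall 0 r, gg E h * KK t h ≤ fracPer N t E := by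
    rw [fracPer_eq t hE]
    exact setLIntegral_le_lintegral _ _
  have hd := I_double t hE r
  have hu : Metric.closedBall (0 : EuclideanSpace ℝ (Fin N)) (2 * r) =
      Metric.closedBall 0 r ∪ ann r := by
    ext h
    simp only [ann, Set.mem_union, mem_closedBall_zero_iff, Set.mem_ofPred_eq]
    constructor
    · intro h1
      rcases le_or_gt ‖h‖ r with h2 | h2
      · exact Or.inl h2
      · exact Or.inr ⟨h2, h1⟩
    · rintro (h1 | h1)
      · linarith
      · exact h1.2
  have hdis : Disjoint (Metric.closedBall (0 : EuclideanSpace ℝ (Fin N)) r) (ann r) := by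
    rw [Set.disjoint_left]
    intro h h1 h2
    simp only [ann, mem_closedBall_zero_iff, Set.mem_ofPred_eq] at h1 h2
    linarith [h2.1]
  rw [hu, lintegral_union (ann_meas r) hdis] at hd
  have hb : (2 : ℝ) ^ (1 - t) ≤ 1 + (1 - t) := by
    have := rpow_one_add_le_one_add_mul_self (s := 1) (by norm_num) (p := 1 - t)
      (by linarith) (by linarith)
    norm_num at this ⊢
    linarith
  have hd2 := hd.trans (mul_le_mul_left (ENNReal.ofReal_le_ofReal hb) _)
  rw [ENNReal.ofReal_add zero_le_one (by linarith), ENNReal.ofReal_one, add_mul, one_mul] at hd2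
  have hfin : ∫⁻ h in Metric.closedBall 0 r, gg E h * KK t h ≠ ⊤ := (hI.trans_lt hP).ne
  have hd3 := (ENNReal.add_le_add_iff_left hfin).1 hd2
  exact hd3.trans (by gcongr)

lemma ann_le_s {N : ℕ} (s t : ℝ) (hs : 0 < s) (hst : s < t) (ht : t < 1)
    {E : Set (EuclideanSpace ℝ (Fin N))}
    (hE : MeasurableSet E) (hP : fracPer N t E < ⊤) (r : ℝ) (hr : 0 < r) :
    ∫⁻ h in ann r, gg E h * KK s h ≤
      ENNReal.ofReal ((2 * r) ^ (t - s)) * (ENNReal.ofReal (1 - t) * fracPer N t E) := by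
  have hm : Measurable (fun h => gg E h * KK t h) := (gg_meas hE).mul (KK_meas t)
  calc _ ≤ ∫⁻ h in ann r, ENNReal.ofReal ((2 * r) ^ (t - s)) * (gg E h * KK t h) := by
        apply setLIntegral_mono' (ann_meas r)
        intro h hh
        have hpos : 0 < ‖h‖ := hr.trans hh.1
        have : KK s h ≤ ENNReal.ofReal ((2 * r) ^ (t - s)) * KK t h := by
          unfold KK
          rw [← ENNReal.ofReal_mul (by positivity)]
          apply ENNReal.ofReal_le_ofReal
          have e : ‖h‖ ^ (-((N : ℝ) + s)) = ‖h‖ ^ (t - s) * ‖h‖ ^ (-((N : ℝ) + t)) := by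
            rw [← Real.rpow_add hpos]
            congr 1
            ring
          rw [e]
          gcongr
          exact hh.2
        calc gg E h * KK s h ≤ gg E h * (ENNReal.ofReal ((2 * r) ^ (t - s)) * KK t h) := by gcongr
          _ = _ := by ring
    _ = ENNReal.ofReal ((2 * r) ^ (t - s)) * ∫⁻ h in ann r, (gg E h * KK t h) :=
        lintegral_const_mul _ hm
    _ ≤ _ := by
        gcongr
        exact ann_le t (hs.trans hst) ht hE hP r hr

lemma tsum_ofReal_geom (c q : ℝ) (hc : 0 ≤ c) (hq : 0 ≤ q) (hq1 : q < 1) :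
    ∑' k : ℕ, ENNReal.ofReal (c * q ^ k) = ENNReal.ofReal (c * (1 - q)⁻¹) := by
  rw [← ENNReal.ofReal_tsum_of_nonneg (fun n => by positivity)
    ((summable_geometric_of_lt_one hq hq1).mul_left c), tsum_mul_left,
    tsum_geometric_of_lt_one hq hq1]

lemma near_le {N : ℕ} (s t δ R : ℝ) (hs : 0 < s) (hst : s < t) (ht : t < 1)
    (hδ : 0 < δ) (hts : δ ≤ t - s) (hR : 0 < R) (hR1 : R ≤ 1)
    {E : Set (EuclideanSpace ℝ (Fin N))}
    (hE : MeasurableSet E) (hP : fracPer N t E < ⊤) :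
    ∫⁻ h in Metric.closedBall 0 R, gg E h * KK s h ≤
      ENNReal.ofReal (R ^ δ * (1 - (1 / 2) ^ δ)⁻¹) * (ENNReal.ofReal (1 - t) * fracPer N t E) := by
  have hsub : Metric.closedBall (0 : EuclideanSpace ℝ (Fin N)) R ⊆
      {0} ∪ ⋃ k : ℕ, ann (R * (1 / 2) ^ (k + 1)) := by
    intro h hh
    rw [mem_closedBall_zero_iff] at hh
    rcases eq_or_ne h 0 with h0 | h0
    · left
      exact h0
    · right
      have hpos : 0 < ‖h‖ := norm_pos_iff.2 h0
      obtain ⟨n, h1, h2⟩ := exists_nat_pow_near_of_lt_one (x := ‖h‖ / R) (y := 1 / 2)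
        (by positivity) ((div_le_one hR).2 hh) (by norm_num) (by norm_num)
      rw [lt_div_iff₀ hR] at h1
      rw [div_le_iff₀ hR] at h2
      refine Set.mem_iUnion.2 ⟨n, ?_, ?_⟩
      · linarith
      · rw [pow_succ]
        linarith
  have h0 : ∫⁻ h in ({0} : Set (EuclideanSpace ℝ (Fin N))), gg E h * KK s h = 0 := by
    rw [lintegral_singleton]
    have : gg E 0 = 0 := by simp [gg]
    simp [this]
  have hq1 : ((1 : ℝ) / 2) ^ δ < 1 := Real.rpow_lt_one (by norm_num) (by norm_num) hδ
  calc _ ≤ ∫⁻ h in {0} ∪ ⋃ k : ℕ, ann (R * (1 / 2) ^ (k + 1)), gg E h * KK s h :=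
        lintegral_mono_set hsub
    _ ≤ _ := lintegral_union_le _ _ _
    _ ≤ ∑' k : ℕ, ∫⁻ h in ann (R * (1 / 2) ^ (k + 1)), gg E h * KK s h := by
        rw [h0, zero_add]
        exact lintegral_iUnion_le _ _
    _ ≤ ∑' k : ℕ, ENNReal.ofReal (R ^ δ * ((1 / 2) ^ δ) ^ k) *
          (ENNReal.ofReal (1 - t) * fracPer N t E) := by
        apply ENNReal.tsum_le_tsum
        intro k
        refine (ann_le_s s t hs hst ht hE hP _ (by positivity)).trans ?_
        gcongr
        have e : 2 * (R * (1 / 2) ^ (k + 1)) = R * (1 / 2) ^ k := by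
          rw [pow_succ]; ring
        have hk : ((1 : ℝ) / 2) ^ k ≤ 1 := pow_le_one₀ (by norm_num) (by norm_num)
        rw [e]
        calc (R * (1 / 2) ^ k) ^ (t - s) ≤ (R * (1 / 2) ^ k) ^ δ := by
              apply Real.rpow_le_rpow_of_exponent_ge (by positivity) _ hts
              exact mul_le_one₀ hR1 (by positivity) hk
          _ = _ := by
              rw [Real.mul_rpow hR.le (by positivity), ← Real.rpow_natCast, ← Real.rpow_natCast,
                ← Real.rpow_mul (by norm_num), ← Real.rpow_mul (by norm_num), mul_comm δ]
    _ = _ := by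
        rw [ENNReal.tsum_mul_right, tsum_ofReal_geom _ _ (by positivity) (by positivity) hq1]

lemma far_le {N : ℕ} (hN : 0 < N) (s R : ℝ) (hs : 0 < s) (hs1 : s < 1) (hR : 0 < R) (hR1 : R ≤ 1)
    (E : Set (EuclideanSpace ℝ (Fin N))) :
    ∫⁻ h in (Metric.closedBall 0 R)ᶜ, gg E h * KK s h ≤
      ENNReal.ofReal (2 ^ (N + 1) * R⁻¹ / s) *
        (volume E * volume (Metric.ball (0 : EuclideanSpace ℝ (Fin N)) 1)) := by
  haveI : Nonempty (Fin N) := ⟨⟨0, hN⟩⟩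
  set A : ℕ → Set (EuclideanSpace ℝ (Fin N)) :=
    fun k => {h | R * 2 ^ k ≤ ‖h‖ ∧ ‖h‖ < R * 2 ^ (k + 1)} with hA
  have hAm : ∀ k, MeasurableSet (A k) := fun k =>
    (measurableSet_le measurable_const measurable_norm).inter
    (measurableSet_lt measurable_norm measurable_const)
  have hsub : (Metric.closedBall (0 : EuclideanSpace ℝ (Fin N)) R)ᶜ ⊆ ⋃ k : ℕ, A k := by
    intro h hh
    rw [Set.mem_compl_iff, mem_closedBall_zero_iff, not_le] at hh
    obtain ⟨n, h1, h2⟩ := exists_nat_pow_near (x := ‖h‖ / R) (y := 2)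
        ((one_le_div hR).2 hh.le) (by norm_num)
    rw [div_lt_iff₀ hR] at h2
    rw [le_div_iff₀ hR] at h1
    refine Set.mem_iUnion.2 ⟨n, ?_, ?_⟩ <;> linarith
  have hq1 : ((1 : ℝ) / 2) ^ s ≤ 1 - s / 2 := by
    have := rpow_one_add_le_one_add_mul_self (s := -1 / 2) (by norm_num) hs.le hs1.le
    norm_num at this ⊢
    linarith
  calc _ ≤ ∫⁻ h in ⋃ k : ℕ, A k, gg E h * KK s h := lintegral_mono_set hsub
    _ ≤ ∑' k : ℕ, ∫⁻ h in A k, gg E h * KK s h := lintegral_iUnion_le _ _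
    _ ≤ ∑' k : ℕ, ENNReal.ofReal ((2 ^ N * R⁻¹) * ((1 / 2) ^ s) ^ k) *
          (volume E * volume (Metric.ball (0 : EuclideanSpace ℝ (Fin N)) 1)) := by
        apply ENNReal.tsum_le_tsum
        intro k
        have hp : 0 < R * 2 ^ k := by positivity
        calc ∫⁻ h in A k, gg E h * KK s h
            ≤ ∫⁻ h in A k, volume E * ENNReal.ofReal ((R * 2 ^ k) ^ (-((N : ℝ) + s))) := by
              apply setLIntegral_mono' (hAm k)
              intro h hh
              gcongr
              · exact gg_le E h
              · apply ENNReal.ofReal_le_ofReal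
                apply Real.rpow_le_rpow_of_nonpos hp hh.1
                have : (0 : ℝ) ≤ N := by positivity
                linarith
          _ = volume E * ENNReal.ofReal ((R * 2 ^ k) ^ (-((N : ℝ) + s))) * volume (A k) := by
              rw [setLIntegral_const]
          _ ≤ volume E * ENNReal.ofReal ((R * 2 ^ k) ^ (-((N : ℝ) + s))) *
                (ENNReal.ofReal ((R * 2 ^ (k + 1)) ^ N) *
                  volume (Metric.ball (0 : EuclideanSpace ℝ (Fin N)) 1)) := by
              gcongr
              have hb := Measure.addHaar_ball (volume : Measure (EuclideanSpace ℝ (Fin N))) 0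
                (r := R * 2 ^ (k + 1)) (by positivity)
              rw [finrank_euclideanSpace_fin] at hb
              rw [← hb]
              apply measure_mono
              intro h hh
              rw [mem_ball_zero_iff]
              exact hh.2
          _ = ENNReal.ofReal ((R * 2 ^ k) ^ (-((N : ℝ) + s)) * (R * 2 ^ (k + 1)) ^ N) *
                (volume E * volume (Metric.ball (0 : EuclideanSpace ℝ (Fin N)) 1)) := by
              rw [ENNReal.ofReal_mul (by positivity)]
              ring
          _ ≤ _ := by
              refine mul_le_mul_left (ENNReal.ofReal_le_ofReal ?_) _
              have e1 : (R * 2 ^ (k + 1)) ^ N = (R * 2 ^ k) ^ (N : ℝ) * 2 ^ N := by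
                rw [Real.rpow_natCast, ← mul_pow, pow_succ, mul_assoc]
              have e2 : (R * 2 ^ k) ^ (-((N : ℝ) + s)) * (R * 2 ^ (k + 1)) ^ N =
                  2 ^ N * (R * 2 ^ k) ^ (-s) := by
                rw [e1, ← mul_assoc, ← Real.rpow_add hp, mul_comm]
                congr 2
                ring
              have e3 : ((2 : ℝ) ^ k) ^ (-s) = ((1 / 2) ^ s) ^ k := by
                rw [one_div, Real.inv_rpow two_pos.le, ← Real.rpow_neg two_pos.le,
                  ← Real.rpow_natCast, ← Real.rpow_natCast,
                  ← Real.rpow_mul two_pos.le, ← Real.rpow_mul two_pos.le, mul_comm]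
              have e4 : R ^ (-s) ≤ R⁻¹ := by
                rw [← Real.rpow_neg_one]
                exact Real.rpow_le_rpow_of_exponent_ge hR hR1 (by linarith)
              rw [e2, Real.mul_rpow hR.le (by positivity), e3, ← mul_assoc]
              gcongr
    _ = ENNReal.ofReal ((2 ^ N * R⁻¹) * (1 - (1 / 2) ^ s)⁻¹) *
          (volume E * volume (Metric.ball (0 : EuclideanSpace ℝ (Fin N)) 1)) := by
        rw [ENNReal.tsum_mul_right, tsum_ofReal_geom _ _ (by positivity) (by positivity)
          (by linarith)]
    _ ≤ _ := by
        gcongr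
        have : (1 - ((1 : ℝ) / 2) ^ s)⁻¹ ≤ (s / 2)⁻¹ := by
          apply inv_anti₀ (by positivity)
          linarith
        calc (2 ^ N * R⁻¹) * (1 - ((1 : ℝ) / 2) ^ s)⁻¹ ≤ (2 ^ N * R⁻¹) * (s / 2)⁻¹ := by gcongr
          _ = _ := by
            rw [pow_succ]
            field_simp

theorem stmt4 (N : ℕ) (hN : 0 < N) (δ₀ : ℝ) (hδ : δ₀ ∈ Set.Ioo (0 : ℝ) 1) :
    ∃ c₀ : ℝ, 0 < c₀ ∧ ∀ s t : ℝ, 0 < s → s < t → t < 1 → δ₀ ≤ t - s →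
      ∀ E : Set (EuclideanSpace ℝ (Fin N)), MeasurableSet E →
        volume E < ⊤ → fracPer N t E < ⊤ →
        (1 - t) * (fracPer N t E).toReal / 2 - c₀ * (volume E).toReal ≤
          freeEnergy N s t E := by
  obtain ⟨hδ0, hδ1⟩ := hδ
  have hq1 : ((1 : ℝ) / 2) ^ δ₀ < 1 := Real.rpow_lt_one (by norm_num) (by norm_num) hδ0
  have hq0 : 0 < ((1 : ℝ) / 2) ^ δ₀ := by positivity
  obtain ⟨R, hR, hR1, hRδ⟩ : ∃ R : ℝ, 0 < R ∧ R ≤ 1 ∧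
      R ^ δ₀ * (1 - (1 / 2) ^ δ₀)⁻¹ = 1 / 2 := by
    have hp : 0 < (1 - ((1 : ℝ) / 2) ^ δ₀) := by linarith
    refine ⟨((1 - (1 / 2) ^ δ₀) / 2) ^ (δ₀⁻¹), by positivity, ?_, ?_⟩
    · apply Real.rpow_le_one (by positivity) (by linarith) (by positivity)
    · rw [← Real.rpow_mul (by positivity), inv_mul_cancel₀ hδ0.ne', Real.rpow_one]
      field_simp
  set w := volume (Metric.ball (0 : EuclideanSpace ℝ (Fin N)) 1) with hw
  have hwf : w ≠ ⊤ := Metric.isBounded_ball.measure_lt_top.ne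
  refine ⟨2 ^ (N + 1) * R⁻¹ * w.toReal + 1, by positivity, ?_⟩
  intro s t hs hst ht hts E hE hEf hP
  have hnear := near_le s t δ₀ R hs hst ht hδ0 hts hR hR1 hE hP
  have hfar := far_le hN s R hs (hst.trans ht) hR hR1 E
  rw [hRδ] at hnear
  have hsum : fracPer N s E ≤ ENNReal.ofReal (1 / 2) * (ENNReal.ofReal (1 - t) * fracPer N t E) +
      ENNReal.ofReal (2 ^ (N + 1) * R⁻¹ / s) * (volume E * w) := by
    rw [fracPer_eq s hE, ← lintegral_add_compl _
      (Metric.isClosed_closedBall (x := (0 : EuclideanSpace ℝ (Fin N))) (ε := R)).measurableSet]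
    exact add_le_add hnear hfar
  have f1 : ENNReal.ofReal (1 / 2) * (ENNReal.ofReal (1 - t) * fracPer N t E) ≠ ⊤ :=
    ENNReal.mul_ne_top ENNReal.ofReal_ne_top (ENNReal.mul_ne_top ENNReal.ofReal_ne_top hP.ne)
  have f2 : ENNReal.ofReal (2 ^ (N + 1) * R⁻¹ / s) * (volume E * w) ≠ ⊤ :=
    ENNReal.mul_ne_top ENNReal.ofReal_ne_top (ENNReal.mul_ne_top hEf.ne hwf)
  have hreal := ENNReal.toReal_mono (ENNReal.add_ne_top.2 ⟨f1, f2⟩) hsum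
  rw [ENNReal.toReal_add f1 f2, ENNReal.toReal_mul, ENNReal.toReal_mul, ENNReal.toReal_mul,
    ENNReal.toReal_mul, ENNReal.toReal_ofReal (by norm_num), ENNReal.toReal_ofReal (by linarith),
    ENNReal.toReal_ofReal (by positivity)] at hreal
  unfold freeEnergy
  set p := (fracPer N t E).toReal with hp
  set v := (volume E).toReal with hv
  have hp0 : 0 ≤ p := ENNReal.toReal_nonneg
  have hv0 : 0 ≤ v := ENNReal.toReal_nonneg
  have h3 := mul_le_mul_of_nonneg_left hreal hs.le
  have h4 : s * (1 / 2 * ((1 - t) * p) + 2 ^ (N + 1) * R⁻¹ / s * (v * w.toReal)) =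
      s * ((1 - t) * p) / 2 + 2 ^ (N + 1) * R⁻¹ * w.toReal * v := by
    field_simp
  have h5 : s * ((1 - t) * p) ≤ (1 - t) * p :=
    mul_le_of_le_one_left (mul_nonneg (by linarith) hp0) (by linarith)
  rw [h4] at h3
  linarith
end

section
/- Let N be a positive integer and δ₀ ∈ (0,1). There exists a constant c₀ > 0, depending only on N and δ₀, such that for all s, t with 0 < s < t < 1 and t − s ≥ δ₀, and every measurable set E ⊆ ℝ^N with |E| = m < ∞ and P_t(E) < ∞, the following bounds hold: (1−t)·P_t(E) ≤ 2·(F_{s,t}(E) + c₀·m) and s·P_s(E) ≤ c₀^{1 − s/t} · m^{1 − s/t} · (F_{s,t}(E) + c₀·m)^{s/t}. -/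
open MeasureTheory ENNReal

noncomputable def gam5 {N : ℕ} (E : Set (EuclideanSpace ℝ (Fin N)))
    (h : EuclideanSpace ℝ (Fin N)) : ℝ≥0∞ :=
  ∫⁻ x, E.indicator (fun _ => (1 : ℝ≥0∞)) x * Eᶜ.indicator (fun _ => (1 : ℝ≥0∞)) (x + h)

noncomputable def ker5 (N : ℕ) (α : ℝ) (h : EuclideanSpace ℝ (Fin N)) : ℝ≥0∞ :=
  ENNReal.ofReal (‖h‖ ^ (-((N : ℝ) + α)))

lemma ker5_meas (N : ℕ) (α : ℝ) : Measurable (ker5 N α) := by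
  unfold ker5
  fun_prop

lemma gam5_meas_aux {N : ℕ} {E : Set (EuclideanSpace ℝ (Fin N))} (hE : MeasurableSet E) :
    Measurable (fun p : EuclideanSpace ℝ (Fin N) × EuclideanSpace ℝ (Fin N) =>
      E.indicator (fun _ => (1 : ℝ≥0∞)) p.1 * Eᶜ.indicator (fun _ => (1 : ℝ≥0∞)) (p.1 + p.2)) := by
  have h1 : Measurable (E.indicator (fun _ => (1 : ℝ≥0∞))) := measurable_const.indicator hE
  have h2 : Measurable (Eᶜ.indicator (fun _ => (1 : ℝ≥0∞))) := measurable_const.indicator hE.compl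
  exact (h1.comp measurable_fst).mul (h2.comp (measurable_fst.add measurable_snd))

lemma gam5_meas {N : ℕ} {E : Set (EuclideanSpace ℝ (Fin N))} (hE : MeasurableSet E) :
    Measurable (gam5 E) :=
  (gam5_meas_aux hE).lintegral_prod_left'

lemma fracPer_eq5 {N : ℕ} (α : ℝ) {E : Set (EuclideanSpace ℝ (Fin N))} (hE : MeasurableSet E) :
    fracPer N α E = ∫⁻ h, gam5 E h * ker5 N α h := by
  unfold fracPer interEnergy
  rw [← lintegral_indicator hE]
  have : ∀ x, E.indicator (fun x => ∫⁻ y in Eᶜ, ENNReal.ofReal (‖x - y‖ ^ (-((N : ℝ) + α)))) x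
      = ∫⁻ h, E.indicator (fun _ => (1 : ℝ≥0∞)) x * Eᶜ.indicator (fun _ => (1 : ℝ≥0∞)) (x + h)
        * ker5 N α h := by
    intro x
    by_cases hx : x ∈ E
    · simp only [Set.indicator_of_mem hx, one_mul]
      rw [← lintegral_indicator hE.compl, ← lintegral_add_left_eq_self _ x]
      congr 1
      ext h
      by_cases hh : x + h ∈ Eᶜ
      · simp [Set.indicator_of_mem hh, ker5]
      · simp [Set.indicator_of_notMem hh]
    · simp [Set.indicator_of_notMem hx]
  rw [lintegral_congr this, lintegral_lintegral_swap]
  · congr 1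
    ext h
    rw [lintegral_mul_const]
    · rfl
    · exact (gam5_meas_aux hE).comp (measurable_id.prodMk measurable_const)
  · exact ((gam5_meas_aux hE).mul ((ker5_meas N α).comp measurable_snd)).aemeasurable

lemma gam5_le {N : ℕ} {E : Set (EuclideanSpace ℝ (Fin N))} (hE : MeasurableSet E)
    (h : EuclideanSpace ℝ (Fin N)) : gam5 E h ≤ volume E := by
  unfold gam5
  calc _ ≤ ∫⁻ x, E.indicator (fun _ => (1 : ℝ≥0∞)) x := by
        apply lintegral_mono
        intro x
        simp only [Set.indicator]
        split_ifs <;> simp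
    _ = volume E := by rw [lintegral_indicator hE]; simp

lemma gam5_two {N : ℕ} {E : Set (EuclideanSpace ℝ (Fin N))} (hE : MeasurableSet E)
    (h : EuclideanSpace ℝ (Fin N)) : gam5 E ((2 : ℝ) • h) ≤ 2 * gam5 E h := by
  have key : gam5 E h = ∫⁻ x, E.indicator (fun _ => (1 : ℝ≥0∞)) (x + h)
      * Eᶜ.indicator (fun _ => (1 : ℝ≥0∞)) (x + h + h) := by
    unfold gam5
    exact (lintegral_add_right_eq_self (fun x => E.indicator (fun _ => (1 : ℝ≥0∞)) x
      * Eᶜ.indicator (fun _ => (1 : ℝ≥0∞)) (x + h)) h).symm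
  rw [two_mul]
  nth_rewrite 2 [key]
  unfold gam5
  rw [← lintegral_add_left]
  · apply lintegral_mono
    intro x
    have e : x + (2 : ℝ) • h = x + h + h := by rw [two_smul, add_assoc]
    simp only [e, Set.indicator, Set.mem_compl_iff]
    split_ifs <;> simp_all
  · exact (gam5_meas_aux hE).comp (measurable_id.prodMk measurable_const)

/-- dyadic annulus -/
def ann5 (N : ℕ) (r : ℝ) : Set (EuclideanSpace ℝ (Fin N)) := {h | r / 2 ≤ ‖h‖ ∧ ‖h‖ < r}

lemma ann5_meas (N : ℕ) (r : ℝ) : MeasurableSet (ann5 N r) :=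
  (measurableSet_le measurable_const measurable_norm).inter
    (measurableSet_lt measurable_norm measurable_const)

lemma scale5 {N : ℕ} (f : EuclideanSpace ℝ (Fin N) → ℝ≥0∞) (hf : Measurable f) :
    ∫⁻ h, f h = 2 ^ N * ∫⁻ h, f ((2 : ℝ) • h) := by
  have h1 := Measure.map_addHaar_smul (volume : Measure (EuclideanSpace ℝ (Fin N)))
    (r := (2 : ℝ)) two_ne_zero
  have h2 : ∫⁻ h, f ((2 : ℝ) • h) = ∫⁻ h, f h ∂(Measure.map ((2 : ℝ) • ·) volume) := by
    rw [lintegral_map hf (measurable_const_smul _)]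
  rw [h2, h1, lintegral_smul_measure]
  simp only [finrank_euclideanSpace, Fintype.card_fin, smul_eq_mul]
  rw [← mul_assoc]
  have : (2 : ℝ≥0∞) ^ N * ENNReal.ofReal |((2 : ℝ) ^ N)⁻¹| = 1 := by
    rw [abs_of_pos (by positivity), ENNReal.ofReal_inv_of_pos (by positivity),
      ENNReal.ofReal_pow (by norm_num)]
    simp only [ENNReal.ofReal_ofNat]
    exact ENNReal.mul_inv_cancel (by simp) (by simp)
  rw [this, one_mul]

lemma doubling5 {N : ℕ} {E : Set (EuclideanSpace ℝ (Fin N))} (hE : MeasurableSet E) (t r : ℝ) :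
    ∫⁻ h in ann5 N r, gam5 E h * ker5 N t h
      ≤ ENNReal.ofReal (2 ^ (1 - t)) * ∫⁻ h in ann5 N (r / 2), gam5 E h * ker5 N t h := by
  have hm : ∀ t, Measurable (fun h => gam5 E h * ker5 N t h) :=
    fun t => (gam5_meas hE).mul (ker5_meas N t)
  rw [← lintegral_indicator (ann5_meas N r), ← lintegral_indicator (ann5_meas N (r/2)),
    scale5 _ ((hm t).indicator (ann5_meas N r)), ← lintegral_const_mul' _ _ (by simp),
    ← lintegral_const_mul' _ _ (by simp)]
  apply lintegral_mono
  intro h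
  have hmem : (2 : ℝ) • h ∈ ann5 N r ↔ h ∈ ann5 N (r / 2) := by
    simp only [ann5, Set.mem_ofPred_eq, norm_smul, Real.norm_ofNat]
    constructor <;> rintro ⟨a, b⟩ <;> constructor <;> linarith
  by_cases hh : h ∈ ann5 N (r / 2)
  · simp only [Set.indicator_of_mem hh, Set.indicator_of_mem (hmem.2 hh)]
    have hk : ker5 N t ((2 : ℝ) • h) = ENNReal.ofReal (2 ^ (-((N : ℝ) + t))) * ker5 N t h := by
      unfold ker5
      rw [← ENNReal.ofReal_mul (by positivity), norm_smul, Real.norm_ofNat,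
        Real.mul_rpow (by norm_num) (norm_nonneg _)]
    have hc : (2 : ℝ≥0∞) ^ N * 2 * ENNReal.ofReal (2 ^ (-((N : ℝ) + t)))
        = ENNReal.ofReal (2 ^ (1 - t)) := by
      have : (2 : ℝ≥0∞) ^ N * 2 = ENNReal.ofReal (2 ^ N * 2) := by
        rw [ENNReal.ofReal_mul (by positivity), ENNReal.ofReal_pow (by norm_num)]
        simp
      rw [this, ← ENNReal.ofReal_mul (by positivity)]
      congr 1
      rw [← Real.rpow_natCast, ← Real.rpow_add_one (by norm_num), ← Real.rpow_add (by norm_num)]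
      congr 1
      ring
    rw [hk, ← hc]
    calc _ ≤ 2 ^ N * ((2 * gam5 E h) * (ENNReal.ofReal (2 ^ (-((N : ℝ) + t))) * ker5 N t h)) := by
          gcongr
          exact gam5_two hE h
      _ = _ := by ring
  · simp only [Set.indicator_of_notMem hh, Set.indicator_of_notMem (fun x => hh (hmem.1 x))]
    simp

/-- Abel summation comparison -/
lemma abel5 (b : ℕ → ℝ≥0∞) (hb : Monotone b) (p q : ℝ) (hp : 0 ≤ p) (hpq : p ≤ q) (hq : q < 1) :
    ENNReal.ofReal (1 - p) * ∑' k, ENNReal.ofReal p ^ k * b k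
      ≤ ENNReal.ofReal (1 - q) * ∑' k, ENNReal.ofReal q ^ k * b k := by
  set d : ℕ → ℝ≥0∞ := fun k => b (k + 1) - b k with hd
  have hS : ∀ q : ℝ, ∑' k, ENNReal.ofReal q ^ k * b k =
      (b 0 + ∑' k, ENNReal.ofReal q ^ (k + 1) * d k)
        + ENNReal.ofReal q * ∑' k, ENNReal.ofReal q ^ k * b k := by
    intro q
    nth_rewrite 1 [tsum_eq_zero_add' ENNReal.summable]
    rw [pow_zero, one_mul, add_assoc, ← ENNReal.tsum_mul_left, ← ENNReal.tsum_add]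
    congr 2
    ext k
    rw [← mul_assoc, ← pow_succ', ← mul_add, tsub_add_cancel_of_le (hb (Nat.le_succ k))]
  have hD : b 0 + ∑' k, ENNReal.ofReal p ^ (k + 1) * d k
      ≤ b 0 + ∑' k, ENNReal.ofReal q ^ (k + 1) * d k := by
    gcongr
  have hSS : ∑' k, ENNReal.ofReal p ^ k * b k ≤ ∑' k, ENNReal.ofReal q ^ k * b k := by
    gcongr
  have h1 := hS p
  have h2 := hS q
  generalize (∑' k, ENNReal.ofReal p ^ k * b k) = Sp at *
  generalize (∑' k, ENNReal.ofReal q ^ k * b k) = Sq at *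
  generalize (b 0 + ∑' k, ENNReal.ofReal p ^ (k + 1) * d k) = Dp at *
  generalize (b 0 + ∑' k, ENNReal.ofReal q ^ (k + 1) * d k) = Dq at *
  by_cases hT : Sq = ⊤
  · rw [hT, ENNReal.mul_top]
    · exact le_top
    · simpa using hq
  have hT' : Sp ≠ ⊤ := ne_top_of_le_ne_top hT hSS
  have hDq : Dq ≠ ⊤ := ne_top_of_le_ne_top hT (h2 ▸ le_self_add)
  have hDp : Dp ≠ ⊤ := ne_top_of_le_ne_top hDq hD
  lift Sp to NNReal using hT'
  lift Sq to NNReal using hT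
  lift Dp to NNReal using hDp
  lift Dq to NNReal using hDq
  have e1 := congrArg ENNReal.toReal h1
  have e2 := congrArg ENNReal.toReal h2
  rw [ENNReal.toReal_add (by simp) (by finiteness), ENNReal.toReal_mul,
    ENNReal.toReal_ofReal (by linarith)] at e1 e2
  simp only [ENNReal.coe_toReal] at e1 e2
  have hD' : (Dp : ℝ) ≤ Dq := by exact_mod_cast hD
  rw [← ENNReal.ofReal_coe_nnreal, ← ENNReal.ofReal_coe_nnreal,
    ← ENNReal.ofReal_mul (by linarith), ← ENNReal.ofReal_mul (by linarith)]
  apply ENNReal.ofReal_le_ofReal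
  linarith

lemma two_le5 (x : ℝ) (h0 : 0 ≤ x) (h1 : x ≤ 1) : x / 2 ≤ 1 - (2 : ℝ) ^ (-x) := by
  have := rpow_one_add_le_one_add_mul_self (s := -(1 / 2 : ℝ)) (by norm_num) h0 h1
  have e : (1 + -(1 / 2 : ℝ)) = 2⁻¹ := by norm_num
  rw [e, Real.inv_rpow (by norm_num), ← Real.rpow_neg (by norm_num)] at this
  linarith

lemma le_two5 (x : ℝ) (h0 : 0 ≤ x) : 1 - (2 : ℝ) ^ (-x) ≤ x := by
  rw [Real.rpow_def_of_pos (by norm_num)]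
  have := Real.add_one_le_exp (Real.log 2 * -x)
  have h2 : Real.log 2 ≤ 1 := by
    have := Real.log_two_lt_d9
    linarith
  nlinarith

lemma cover5 {N : ℕ} (r : ℝ) (hr : 0 < r) (f : EuclideanSpace ℝ (Fin N) → ℝ≥0∞) (hf : f 0 = 0) :
    ∫⁻ h, f h ≤ (∑' k : ℕ, ∫⁻ h in ann5 N (r / 2 ^ k), f h)
      + ∑' k : ℕ, ∫⁻ h in ann5 N (r * 2 ^ (k + 1)), f h := by
  have hsub : (Set.univ : Set (EuclideanSpace ℝ (Fin N))) ⊆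
      {0} ∪ ((⋃ k : ℕ, ann5 N (r / 2 ^ k)) ∪ ⋃ k : ℕ, ann5 N (r * 2 ^ (k + 1))) := by
    intro h _
    by_cases h0 : h = 0
    · left; exact h0
    right
    have hpos : 0 < ‖h‖ / r := div_pos (norm_pos_iff.2 h0) hr
    obtain ⟨n, hn1, hn2⟩ := exists_mem_Ico_zpow (y := (2 : ℝ)) hpos (by norm_num)
    rw [le_div_iff₀ hr] at hn1
    rw [div_lt_iff₀ hr] at hn2
    rcases le_or_gt 0 n with hn | hn
    · right
      lift n to ℕ using hn
      rw [Set.mem_iUnion]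
      refine ⟨n, ?_, ?_⟩
      · rw [zpow_natCast] at hn1
        rw [pow_succ]
        linarith
      · have : ((n : ℤ) + 1) = ((n + 1 : ℕ) : ℤ) := by push_cast; ring
        rw [this, zpow_natCast] at hn2
        linarith
    · left
      rw [Set.mem_iUnion]
      obtain ⟨k, hk⟩ : ∃ k : ℕ, n + 1 = -(k : ℤ) := ⟨(-(n + 1)).toNat, by omega⟩
      have e2 : (2 : ℝ) ^ (n + 1) * r = r / 2 ^ k := by
        rw [hk, zpow_neg, zpow_natCast]; ring
      have e3 : (2 : ℝ) ^ (n + 1) = 2 ^ n * 2 := zpow_add_one₀ (by norm_num) n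
      refine ⟨k, ?_, ?_⟩
      · rw [← e2, e3]; linarith
      · rw [← e2]; exact hn2
  calc ∫⁻ h, f h = ∫⁻ h in Set.univ, f h := by simp
    _ ≤ _ := lintegral_mono_set hsub
    _ ≤ _ := lintegral_union_le _ _ _
    _ ≤ 0 + _ := by
      gcongr
      · rw [lintegral_singleton, hf, zero_mul]
      · refine (lintegral_union_le _ _ _).trans ?_
        gcongr
        · exact lintegral_iUnion_le _ _
        · exact lintegral_iUnion_le _ _
    _ = _ := zero_add _

lemma ann5_disj (N : ℕ) (r : ℝ) (hr : 0 < r) :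
    Pairwise (Function.onFun Disjoint (fun k : ℕ => ann5 N (r / 2 ^ k))) := by
  have key : ∀ i j : ℕ, i < j → Disjoint (ann5 N (r / 2 ^ i)) (ann5 N (r / 2 ^ j)) := by
    intro i j hij
    rw [Set.disjoint_left]
    rintro h ⟨h1, _⟩ ⟨_, h2⟩
    have : r / 2 ^ j ≤ r / 2 ^ (i + 1) := by
      gcongr
      · norm_num
      · exact hij
    rw [pow_succ, ← div_div] at this
    linarith
  intro i j hij
  rcases lt_or_gt_of_ne hij with h | h
  · exact key i j h
  · exact (key j i h).symm

lemma near5 {N : ℕ} {E : Set (EuclideanSpace ℝ (Fin N))} (hE : MeasurableSet E) (s t r : ℝ)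
    (hs : 0 < s) (hst : s < t) (ht : t < 1) (hr : 0 < r) :
    ∑' k : ℕ, ∫⁻ h in ann5 N (r / 2 ^ k), gam5 E h * ker5 N s h
      ≤ ENNReal.ofReal (r ^ (t - s) * (2 * (1 - t) / (1 - s))) * ∫⁻ h, gam5 E h * ker5 N t h := by
  have hm : ∀ t, Measurable (fun h => gam5 E h * ker5 N t h) :=
    fun t => (gam5_meas hE).mul (ker5_meas N t)
  set A : ℕ → ℝ≥0∞ := fun k => ∫⁻ h in ann5 N (r / 2 ^ k), gam5 E h * ker5 N t h with hA
  set c : ℝ≥0∞ := ENNReal.ofReal (2 ^ (1 - t)) with hc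
  set b : ℕ → ℝ≥0∞ := fun k => c ^ k * A k with hb
  have hmono : Monotone b := by
    apply monotone_nat_of_le_succ
    intro k
    simp only [hb]
    rw [pow_succ, mul_assoc]
    gcongr
    have := doubling5 hE t (r / 2 ^ k)
    rw [div_div, ← pow_succ] at this
    exact this
  have hab := abel5 b hmono (2 ^ (-(1 - s))) (2 ^ (-(1 - t))) (by positivity)
    (Real.rpow_le_rpow_of_exponent_le (by norm_num) (by linarith))
    (Real.rpow_lt_one_of_one_lt_of_neg (by norm_num) (by linarith))
  have hq : ∀ k, ENNReal.ofReal (2 ^ (-(1 - t))) ^ k * b k = A k := by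
    intro k
    simp only [hb]
    rw [← mul_assoc, ← mul_pow, hc, ← ENNReal.ofReal_mul (by positivity),
      ← Real.rpow_add (by norm_num)]
    simp
  have hp : ∀ k, ∫⁻ h in ann5 N (r / 2 ^ k), gam5 E h * ker5 N s h
      ≤ ENNReal.ofReal (r ^ (t - s)) * (ENNReal.ofReal (2 ^ (-(1 - s))) ^ k * b k) := by
    intro k
    simp only [hb]
    rw [← mul_assoc (_ ^ k), ← mul_pow, hc, ← ENNReal.ofReal_mul (by positivity),
      ← Real.rpow_add (by norm_num), ← mul_assoc, ← ENNReal.ofReal_pow (by positivity),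
      ← ENNReal.ofReal_mul (by positivity), hA, ← lintegral_const_mul' _ _ (by simp)]
    apply setLIntegral_mono' (ann5_meas _ _)
    rintro h ⟨h1, h2⟩
    have hh : 0 < ‖h‖ := lt_of_lt_of_le (by positivity) h1
    rw [mul_left_comm]
    gcongr
    unfold ker5
    rw [← ENNReal.ofReal_mul (by positivity)]
    apply ENNReal.ofReal_le_ofReal
    have e : r ^ (t - s) * (2 ^ (-(1 - s) + (1 - t))) ^ k = (r / 2 ^ k) ^ (t - s) := by
      rw [Real.div_rpow hr.le (by positivity), div_eq_mul_inv, ← Real.rpow_neg (by positivity),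
        ← Real.rpow_natCast, ← Real.rpow_natCast, ← Real.rpow_mul (by norm_num),
        ← Real.rpow_mul (by norm_num)]
      congr 2
      ring
    rw [e]
    have e2 : ‖h‖ ^ (-((N : ℝ) + s)) = ‖h‖ ^ (t - s) * ‖h‖ ^ (-((N : ℝ) + t)) := by
      rw [← Real.rpow_add hh]; congr 1; ring
    rw [e2]
    gcongr
  have hsumA : ∑' k, A k ≤ ∫⁻ h, gam5 E h * ker5 N t h := by
    rw [← lintegral_iUnion (fun k => ann5_meas N _) (ann5_disj N r hr)]
    exact setLIntegral_le_lintegral _ _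
  simp only [hq] at hab
  set Sp := ∑' k, ENNReal.ofReal (2 ^ (-(1 - s))) ^ k * b k with hSp
  have h1s : 0 < 1 - s := by linarith
  have hab2 : ENNReal.ofReal ((1 - s) / 2) * Sp ≤ ENNReal.ofReal (1 - t) * ∑' k, A k := by
    refine le_trans ?_ (hab.trans ?_)
    · gcongr
      exact two_le5 _ (by linarith) (by linarith)
    · apply mul_le_mul_left
      apply ENNReal.ofReal_le_ofReal
      exact le_two5 _ (by linarith)
  have hSp2 : Sp ≤ ENNReal.ofReal (2 * (1 - t) / (1 - s)) * ∑' k, A k := by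
    calc Sp = ENNReal.ofReal (2 / (1 - s)) * (ENNReal.ofReal ((1 - s) / 2) * Sp) := by
          rw [← mul_assoc, ← ENNReal.ofReal_mul (by positivity)]
          have : 2 / (1 - s) * ((1 - s) / 2) = 1 := by field_simp
          rw [this]; simp
      _ ≤ ENNReal.ofReal (2 / (1 - s)) * (ENNReal.ofReal (1 - t) * ∑' k, A k) := by gcongr
      _ = _ := by
          rw [← mul_assoc, ← ENNReal.ofReal_mul (by positivity)]
          congr 2
          ring
  calc _ ≤ ∑' k, ENNReal.ofReal (r ^ (t - s)) * (ENNReal.ofReal (2 ^ (-(1 - s))) ^ k * b k) :=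
        ENNReal.tsum_le_tsum hp
    _ = ENNReal.ofReal (r ^ (t - s)) * Sp := ENNReal.tsum_mul_left
    _ ≤ ENNReal.ofReal (r ^ (t - s)) * (ENNReal.ofReal (2 * (1 - t) / (1 - s)) *
          ∫⁻ h, gam5 E h * ker5 N t h) := by
        gcongr
        exact hSp2.trans (by gcongr)
    _ = _ := by
        rw [← mul_assoc, ← ENNReal.ofReal_mul (by positivity)]

lemma far5 {N : ℕ} {E : Set (EuclideanSpace ℝ (Fin N))} (hE : MeasurableSet E) (s r : ℝ)
    (hs : 0 < s) (hs1 : s < 1) (hr : 0 < r) :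
    ∑' k : ℕ, ∫⁻ h in ann5 N (r * 2 ^ (k + 1)), gam5 E h * ker5 N s h
      ≤ volume E * volume (Metric.ball (0 : EuclideanSpace ℝ (Fin N)) 1)
        * ENNReal.ofReal (2 ^ N * r ^ (-s) * (2 / s)) := by
  have hk : ∀ k : ℕ, ∫⁻ h in ann5 N (r * 2 ^ (k + 1)), gam5 E h * ker5 N s h
      ≤ volume E * volume (Metric.ball (0 : EuclideanSpace ℝ (Fin N)) 1)
        * ENNReal.ofReal (2 ^ N * r ^ (-s)) * ENNReal.ofReal (2 ^ (-s)) ^ k := by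
    intro k
    have hR : 0 < r * 2 ^ k := by positivity
    calc _ ≤ ∫⁻ h in ann5 N (r * 2 ^ (k + 1)),
            volume E * ENNReal.ofReal ((r * 2 ^ k) ^ (-((N : ℝ) + s))) := by
          apply setLIntegral_mono' (ann5_meas _ _)
          rintro h ⟨h1, h2⟩
          have h1' : r * 2 ^ k ≤ ‖h‖ := by rw [pow_succ] at h1; linarith
          gcongr
          · exact gam5_le hE h
          · apply ENNReal.ofReal_le_ofReal
            apply Real.rpow_le_rpow_of_nonpos hR h1'
            have : (0 : ℝ) ≤ N := Nat.cast_nonneg _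
            linarith
      _ = volume E * ENNReal.ofReal ((r * 2 ^ k) ^ (-((N : ℝ) + s)))
            * volume (ann5 N (r * 2 ^ (k + 1))) := by rw [setLIntegral_const]
      _ ≤ volume E * ENNReal.ofReal ((r * 2 ^ k) ^ (-((N : ℝ) + s)))
            * volume (Metric.ball (0 : EuclideanSpace ℝ (Fin N)) (r * 2 ^ (k + 1))) := by
          gcongr
          rintro h ⟨_, h2⟩
          simpa using h2
      _ = volume E * ENNReal.ofReal ((r * 2 ^ k) ^ (-((N : ℝ) + s)))
            * (ENNReal.ofReal ((r * 2 ^ (k + 1)) ^ N)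
              * volume (Metric.ball (0 : EuclideanSpace ℝ (Fin N)) 1)) := by
          rw [Measure.addHaar_ball_of_pos _ _ (by positivity)]
          simp
      _ = volume E * volume (Metric.ball (0 : EuclideanSpace ℝ (Fin N)) 1) *
          (ENNReal.ofReal ((r * 2 ^ k) ^ (-((N : ℝ) + s))) *
            ENNReal.ofReal ((r * 2 ^ (k + 1)) ^ N)) := by ring
      _ = _ := by
          rw [mul_assoc (_ * _) (ENNReal.ofReal _)]
          congr 1
          rw [← ENNReal.ofReal_mul (by positivity), ← ENNReal.ofReal_pow (by positivity),
            ← ENNReal.ofReal_mul (by positivity)]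
          congr 1
          have e1 : (r * 2 ^ (k + 1)) ^ N = (r * 2 ^ k) ^ (N : ℝ) * 2 ^ N := by
            rw [Real.rpow_natCast, ← mul_pow, pow_succ, mul_assoc]
          rw [e1, ← mul_assoc, ← Real.rpow_add hR]
          have e2 : -((N : ℝ) + s) + N = -s := by ring
          rw [e2, Real.mul_rpow hr.le (by positivity), ← Real.rpow_natCast, ← Real.rpow_natCast,
            ← Real.rpow_natCast, ← Real.rpow_mul (by norm_num), ← Real.rpow_mul (by norm_num),
            mul_comm (k : ℝ)]
          ring
  refine (ENNReal.tsum_le_tsum hk).trans ?_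
  rw [ENNReal.tsum_mul_left, ENNReal.tsum_geometric,
    ENNReal.ofReal_mul (p := 2 ^ N * r ^ (-s)) (by positivity),
    ← mul_assoc]
  apply mul_le_mul_right
  have h2 := two_le5 s hs.le hs1.le
  rw [← ENNReal.ofReal_one, ← ENNReal.ofReal_sub _ (by positivity),
    ← ENNReal.ofReal_inv_of_pos (by linarith)]
  apply ENNReal.ofReal_le_ofReal
  rw [inv_eq_one_div, div_le_div_iff₀ (by linarith) hs]
  linarith

lemma core5 {N : ℕ} {E : Set (EuclideanSpace ℝ (Fin N))} (hE : MeasurableSet E)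
    (s t r m : ℝ) (hs : 0 < s) (hst : s < t) (ht : t < 1) (hr : 0 < r) (hm0 : 0 ≤ m)
    (hm : volume E = ENNReal.ofReal m) (hf : fracPer N t E < ⊤) :
    s * (fracPer N s E).toReal ≤ s * (r ^ (t - s) * (2 / (1 - s))) *
        ((1 - t) * (fracPer N t E).toReal)
      + (2 ^ (N + 1) * (volume (Metric.ball (0 : EuclideanSpace ℝ (Fin N)) 1)).toReal)
        * (m * r ^ (-s)) := by
  have h0 : gam5 E 0 * ker5 N s 0 = 0 := by
    unfold ker5
    have : (-((N : ℝ) + s)) ≠ 0 := by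
      have : (0 : ℝ) ≤ N := Nat.cast_nonneg _
      linarith
    rw [norm_zero, Real.zero_rpow this]
    simp
  have h1 := (cover5 r hr (fun h => gam5 E h * ker5 N s h) h0).trans
    (add_le_add (near5 hE s t r hs hst ht hr) (far5 hE s r hs (by linarith) hr))
  rw [← fracPer_eq5 s hE, ← fracPer_eq5 t hE, hm] at h1
  have hball : volume (Metric.ball (0 : EuclideanSpace ℝ (Fin N)) 1) ≠ ⊤ :=
    measure_ball_lt_top.ne
  have hft := hf.ne
  have h2 := ENNReal.toReal_mono (by finiteness) h1
  have h1s : 0 < 1 - s := by linarith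
  have h1t : 0 < 1 - t := by linarith
  rw [ENNReal.toReal_add (by finiteness) (by finiteness)] at h2
  simp only [ENNReal.toReal_mul] at h2
  rw [ENNReal.toReal_ofReal (by positivity), ENNReal.toReal_ofReal (by positivity),
    ENNReal.toReal_ofReal (by positivity)] at h2
  refine (mul_le_mul_of_nonneg_left h2 hs.le).trans (le_of_eq ?_)
  field_simp
  ring

theorem stmt5 (N : ℕ) (hN : 0 < N) (δ₀ : ℝ) (hδ : δ₀ ∈ Set.Ioo (0 : ℝ) 1) :
    ∃ c₀ : ℝ, 0 < c₀ ∧ ∀ s t : ℝ, 0 < s → s < t → t < 1 → δ₀ ≤ t - s →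
      ∀ (E : Set (EuclideanSpace ℝ (Fin N))) (m : ℝ), 0 ≤ m → MeasurableSet E →
        volume E = ENNReal.ofReal m → fracPer N t E < ⊤ →
        (1 - t) * (fracPer N t E).toReal ≤ 2 * (freeEnergy N s t E + c₀ * m) ∧
        s * (fracPer N s E).toReal ≤
          c₀ ^ (1 - s / t) * m ^ (1 - s / t) *
            (freeEnergy N s t E + c₀ * m) ^ (s / t) := by
  obtain ⟨hδ0, hδ1⟩ := hδ
  obtain ⟨C2, hC2⟩ : ∃ C2 : ℝ, C2 =
    2 ^ (N + 1) * (volume (Metric.ball (0 : EuclideanSpace ℝ (Fin N)) 1)).toReal := ⟨_, rfl⟩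
  have hC2n : 0 ≤ C2 := by rw [hC2]; positivity
  obtain ⟨r₀, hr₀⟩ : ∃ r₀ : ℝ, r₀ = (δ₀ / 4) ^ (1 / δ₀) := ⟨_, rfl⟩
  have hr₀p : 0 < r₀ := by rw [hr₀]; positivity
  have hr₀1 : r₀ ≤ 1 := by
    rw [hr₀]; exact Real.rpow_le_one (by positivity) (by linarith) (by positivity)
  have hr₀δ : r₀ ^ δ₀ = δ₀ / 4 := by
    rw [hr₀, ← Real.rpow_mul (by positivity), one_div_mul_cancel hδ0.ne', Real.rpow_one]
  set K : ℝ := 2 / δ₀ + C2 with hK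
  have hK1 : 1 ≤ 2 * K := by
    have : 2 ≤ 2 / δ₀ := by rw [le_div_iff₀ hδ0]; linarith
    linarith
  set c : ℝ := C2 * r₀ ^ (-1 : ℝ) with hc
  have hcn : 0 ≤ c := by positivity
  set g : ℝ := (2 * K) ^ (1 / δ₀) with hg
  have hg1 : 1 ≤ g := Real.one_le_rpow hK1 (by positivity)
  have hgδ : g ^ δ₀ = 2 * K := by
    rw [hg, ← Real.rpow_mul (by linarith), one_div_mul_cancel hδ0.ne', Real.rpow_one]
  refine ⟨c + g, by linarith, ?_⟩
  intro s t hs hst ht hd E m hm0 hE hm hf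
  have ht0 : 0 < t := by linarith
  have core : ∀ r : ℝ, 0 < r → s * (fracPer N s E).toReal ≤
      2 / δ₀ * (r ^ (t - s) * ((1 - t) * (fracPer N t E).toReal)) + C2 * (m * r ^ (-s)) := by
    intro r hr
    have h := core5 hE s t r m hs hst ht hr hm0 hm hf
    rw [← hC2] at h
    refine h.trans ?_
    gcongr ?_ + _
    have h1t : 0 < 1 - t := by linarith
    have h1s : 0 < 1 - s := by linarith
    have hle : s * (2 / (1 - s)) ≤ 2 / δ₀ := by
      calc s * (2 / (1 - s)) ≤ 1 * (2 / δ₀) := by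
            gcongr
            · linarith
            · linarith
        _ = _ := one_mul _
    calc _ = s * (2 / (1 - s)) * (r ^ (t - s) * ((1 - t) * (fracPer N t E).toReal)) := by ring
      _ ≤ _ := by gcongr
  have hAn : 0 ≤ (1 - t) * (fracPer N t E).toReal :=
    mul_nonneg (by linarith) ENNReal.toReal_nonneg
  have hBA : s * (fracPer N s E).toReal ≤ 1 / 2 * ((1 - t) * (fracPer N t E).toReal) + c * m := by
    refine (core r₀ hr₀p).trans ?_
    have h1 : r₀ ^ (t - s) ≤ δ₀ / 4 := by
      rw [← hr₀δ]
      exact Real.rpow_le_rpow_of_exponent_ge hr₀p hr₀1 hd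
    have h2 : r₀ ^ (-s) ≤ r₀ ^ (-1 : ℝ) :=
      Real.rpow_le_rpow_of_exponent_ge hr₀p hr₀1 (by linarith)
    have e1 : 2 / δ₀ * (δ₀ / 4 * ((1 - t) * (fracPer N t E).toReal))
        = 1 / 2 * ((1 - t) * (fracPer N t E).toReal) := by field_simp; norm_num
    have e2 : C2 * (m * r₀ ^ (-1 : ℝ)) = c * m := by rw [hc]; ring
    rw [← e1, ← e2]
    gcongr
  have hFdef : freeEnergy N s t E =
    (1 - t) * (fracPer N t E).toReal - s * (fracPer N s E).toReal := rfl
  have hgm : 0 ≤ g * m := by positivity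
  have hst1 : 0 < 1 - s / t := by
    rw [sub_pos, div_lt_one ht0]; exact hst
  set A := (1 - t) * (fracPer N t E).toReal with hA
  set X := freeEnergy N s t E + (c + g) * m with hX
  have hXA : A / 2 + g * m ≤ X := by
    rw [hX, hFdef]; linarith
  refine ⟨by linarith, ?_⟩
  rcases hm0.eq_or_lt with h0 | hmp
  · have hv : volume E = 0 := by rw [hm, ← h0]; simp
    have : fracPer N s E = 0 := by
      unfold fracPer interEnergy
      exact setLIntegral_measure_zero _ _ hv
    rw [this, ← h0, Real.zero_rpow hst1.ne']
    simp
  have hXp : 0 < X := by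
    have : 0 < g * m := by positivity
    linarith
  set r : ℝ := (m / (2 * X)) ^ (1 / t) with hr
  have hrp : 0 < r := by positivity
  have er : ∀ a : ℝ, r ^ a = m ^ (a / t) * (2 * X) ^ (-(a / t)) := by
    intro a
    rw [hr, ← Real.rpow_mul (by positivity), Real.div_rpow hmp.le (by positivity),
      Real.rpow_neg (by positivity), div_eq_mul_inv]
    have : 1 / t * a = a / t := by ring
    rw [this]
  have hts : (t - s) / t = 1 - s / t := by field_simp
  have e1 : r ^ (t - s) * (2 * X) = m ^ (1 - s / t) * (2 * X) ^ (s / t) := by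
    rw [er, hts, mul_assoc, ← Real.rpow_add_one (by positivity)]
    congr 2
    ring
  have e2 : m * r ^ (-s) = m ^ (1 - s / t) * (2 * X) ^ (s / t) := by
    rw [er, ← mul_assoc, mul_comm m, ← Real.rpow_add_one (by positivity)]
    congr 2 <;> ring
  have hst0 : 0 ≤ s / t := by positivity
  have hδle : δ₀ ≤ 1 - s / t := by
    rw [← hts, le_div_iff₀ ht0]
    nlinarith
  have hKc : 2 * K ≤ (c + g) ^ (1 - s / t) := by
    rw [← hgδ]
    calc g ^ δ₀ ≤ (c + g) ^ δ₀ := by gcongr; linarith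
      _ ≤ _ := Real.rpow_le_rpow_of_exponent_le (by linarith) hδle
  have h2 : (2 : ℝ) ^ (s / t) ≤ 2 := by
    calc (2 : ℝ) ^ (s / t) ≤ 2 ^ (1 : ℝ) :=
          Real.rpow_le_rpow_of_exponent_le (by norm_num) (by linarith)
      _ = 2 := Real.rpow_one 2
  have hKn : 0 ≤ K := by linarith
  calc s * (fracPer N s E).toReal ≤ 2 / δ₀ * (r ^ (t - s) * A) + C2 * (m * r ^ (-s)) := core r hrp
    _ ≤ 2 / δ₀ * (r ^ (t - s) * (2 * X)) + C2 * (m * r ^ (-s)) := by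
        gcongr
        linarith
    _ = K * 2 ^ (s / t) * (m ^ (1 - s / t) * X ^ (s / t)) := by
        rw [e1, e2, Real.mul_rpow (by norm_num) hXp.le, hK]; ring
    _ ≤ K * 2 * (m ^ (1 - s / t) * X ^ (s / t)) := by gcongr
    _ = 2 * K * (m ^ (1 - s / t) * X ^ (s / t)) := by ring
    _ ≤ (c + g) ^ (1 - s / t) * (m ^ (1 - s / t) * X ^ (s / t)) := by gcongr
    _ = _ := by ring
end

section
/- Let N be a positive integer, δ₀ ∈ (0,1), and 0 < s < t < 1 with t − s ≥ δ₀. Let B denote the unit ball of ℝ^N, and set c₁ = (1−t)·P_t(B)/|B|^{(N−t)/N} and c₂ = s·P_s(B)/|B|^{(N−s)/N}. Then there exists c₀ > 0, depending only on N and δ₀, such that for every m > 0: −c₀·m ≤ φ(m) ≤ c₁·m^{(N−t)/N}·(1 − (c₂/c₁)·m^{(t−s)/N}). -/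
open MeasureTheory ENNReal

/-- The isovolumetric function `φ(m) = inf { F_{s,t}(E) : |E| = m, P_t(E) < ∞ }`. -/
noncomputable def isoFn (N : ℕ) (s t m : ℝ) : ℝ :=
  sInf {x : ℝ | ∃ E : Set (EuclideanSpace ℝ (Fin N)), MeasurableSet E ∧
    volume E = ENNReal.ofReal m ∧ fracPer N t E < ⊤ ∧ x = freeEnergy N s t E}

namespace FP
open Metric

abbrev V (N : ℕ) := EuclideanSpace ℝ (Fin N)

noncomputable def K (N : ℕ) (α : ℝ) (h : V N) : ℝ≥0∞ := ENNReal.ofReal (‖h‖ ^ (-((N : ℝ) + α)))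

noncomputable def g {N : ℕ} (A : Set (V N)) (h : V N) : ℝ≥0∞ :=
  ∫⁻ x, A.indicator 1 x * Aᶜ.indicator 1 (x + h)

lemma K_meas (N : ℕ) (α : ℝ) : Measurable (K N α) := by
  unfold K; fun_prop

lemma ind_meas {N : ℕ} {A : Set (V N)} (hA : MeasurableSet A) :
    Measurable (A.indicator (1 : V N → ℝ≥0∞)) := measurable_one.indicator hA

lemma pair_meas {N : ℕ} {A : Set (V N)} (hA : MeasurableSet A) :
    Measurable (fun p : V N × V N => A.indicator (1 : V N → ℝ≥0∞) p.2 *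
      Aᶜ.indicator (1 : V N → ℝ≥0∞) (p.2 + p.1)) :=
  ((ind_meas hA).comp measurable_snd).mul
    ((ind_meas hA.compl).comp (measurable_snd.add measurable_fst))

lemma g_meas {N : ℕ} {A : Set (V N)} (hA : MeasurableSet A) : Measurable (g A) :=
  (pair_meas hA).lintegral_prod_right'

lemma sec_meas {N : ℕ} {A : Set (V N)} (hA : MeasurableSet A) (h : V N) :
    Measurable (fun x : V N => A.indicator (1 : V N → ℝ≥0∞) x *
      Aᶜ.indicator (1 : V N → ℝ≥0∞) (x + h)) :=
  (pair_meas hA).comp (measurable_const.prodMk measurable_id)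

lemma Kg_meas {N : ℕ} (α : ℝ) {A : Set (V N)} (hA : MeasurableSet A) :
    Measurable (fun h : V N => K N α h * g A h) := (K_meas N α).mul (g_meas hA)

lemma iKg_meas {N : ℕ} (α : ℝ) {A S : Set (V N)} (hA : MeasurableSet A) (hS : MeasurableSet S) :
    Measurable (fun h : V N => S.indicator 1 h * (K N α h * g A h)) :=
  (ind_meas hS).mul (Kg_meas α hA)

lemma setL_eq {N : ℕ} {A : Set (V N)} (hA : MeasurableSet A) (f : V N → ℝ≥0∞) :
    ∫⁻ x in A, f x = ∫⁻ x, A.indicator 1 x * f x := by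
  rw [← lintegral_indicator hA]
  congr 1; ext x
  by_cases h : x ∈ A <;> simp [h]

lemma fracPer_eq {N : ℕ} (α : ℝ) {A : Set (V N)} (hA : MeasurableSet A) :
    fracPer N α A = ∫⁻ h, K N α h * g A h := by
  unfold fracPer interEnergy
  rw [setL_eq hA]
  have h1 : ∀ x : V N, ∫⁻ y in Aᶜ, ENNReal.ofReal (‖x - y‖ ^ (-((N : ℝ) + α)))
      = ∫⁻ h, Aᶜ.indicator 1 (x + h) * K N α h := by
    intro x
    rw [setL_eq hA.compl, ← lintegral_add_left_eq_self _ x]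
    simp [K]
  simp_rw [h1]
  have m1 : ∀ x : V N, Measurable fun h => Aᶜ.indicator (1 : V N → ℝ≥0∞) (x + h) * K N α h :=
    fun x => ((ind_meas hA.compl).comp (measurable_const.add measurable_id)).mul (K_meas N α)
  have h2 : ∀ x : V N, A.indicator 1 x * ∫⁻ h, Aᶜ.indicator 1 (x + h) * K N α h
      = ∫⁻ h, K N α h * (A.indicator 1 x * Aᶜ.indicator 1 (x + h)) := by
    intro x
    rw [← lintegral_const_mul _ (m1 x)]
    congr 1; ext h; ring
  simp_rw [h2]
  rw [lintegral_lintegral_swap]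
  · congr 1; ext h
    rw [lintegral_const_mul, g]
    exact (pair_meas hA).comp (measurable_const.prodMk measurable_id)
  · apply Measurable.aemeasurable
    exact ((K_meas N α).comp measurable_snd).mul ((pair_meas hA).comp measurable_swap)

lemma g_le {N : ℕ} {A : Set (V N)} (hA : MeasurableSet A) (h : V N) : g A h ≤ volume A := by
  rw [← lintegral_indicator_one hA]
  apply lintegral_mono
  intro x
  by_cases hx : x ∈ A <;> by_cases hy : x + h ∈ A <;> simp [hx, hy]

lemma g_two {N : ℕ} {A : Set (V N)} (hA : MeasurableSet A) (h : V N) :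
    g A ((2 : ℝ) • h) ≤ 2 * g A h := by
  have e : g A h = ∫⁻ x, A.indicator 1 (x + h) * Aᶜ.indicator 1 (x + h + h) := by
    rw [g, ← lintegral_add_right_eq_self _ h]
  have : 2 * g A h = (∫⁻ x, A.indicator 1 x * Aᶜ.indicator 1 (x + h)) +
      ∫⁻ x, A.indicator 1 (x + h) * Aᶜ.indicator 1 (x + h + h) := by
    rw [← e, two_mul]; rfl
  rw [this, ← lintegral_add_left (sec_meas hA h)]
  apply lintegral_mono
  intro x
  have e2 : x + (2 : ℝ) • h = x + h + h := by rw [two_smul, add_assoc]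
  dsimp only
  rw [e2]
  by_cases hx : x ∈ A <;> by_cases hy : x + h ∈ A <;> by_cases hz : x + h + h ∈ A <;>
    simp [hx, hy, hz]

lemma lint_smul {N : ℕ} {r : ℝ} (hr : 0 < r) {f : V N → ℝ≥0∞} (hf : Measurable f) :
    ∫⁻ x, f x = ENNReal.ofReal (r ^ N) * ∫⁻ x, f (r • x) := by
  rw [← lintegral_map hf (measurable_const_smul r), Measure.map_addHaar_smul _ hr.ne',
    lintegral_smul_measure, smul_eq_mul, ← mul_assoc, ← ENNReal.ofReal_mul (by positivity),
    finrank_euclideanSpace_fin, abs_of_pos (by positivity), mul_inv_cancel₀ (by positivity)]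
  simp

lemma K_smul {N : ℕ} (α : ℝ) {r : ℝ} (hr : 0 < r) (h : V N) :
    K N α (r • h) = ENNReal.ofReal (r ^ (-((N : ℝ) + α))) * K N α h := by
  unfold K
  rw [norm_smul, Real.norm_of_nonneg hr.le, Real.mul_rpow hr.le (norm_nonneg _),
    ENNReal.ofReal_mul (by positivity)]

lemma K_zero {N : ℕ} {α : ℝ} (hα : 0 < α) : K N α 0 = 0 := by
  unfold K
  rw [norm_zero, Real.zero_rpow (by have : (0:ℝ) ≤ N := by positivity
                                    linarith)]
  simp

lemma pow_comb (N : ℕ) (α : ℝ) {r : ℝ} (hr : 0 < r) :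
    r ^ N * r ^ (-((N : ℝ) + α)) = r ^ (-α) := by
  rw [← Real.rpow_natCast, ← Real.rpow_add hr]; congr 1; ring

noncomputable def I {N : ℕ} (α : ℝ) (A : Set (V N)) (S : Set (V N)) : ℝ≥0∞ :=
  ∫⁻ h in S, K N α h * g A h

lemma I_le {N : ℕ} (α : ℝ) {A : Set (V N)} (hA : MeasurableSet A) (S : Set (V N)) :
    I α A S ≤ fracPer N α A := by
  rw [fracPer_eq α hA]; exact setLIntegral_le_lintegral _ _

lemma I_scale {N : ℕ} (t : ℝ) {A : Set (V N)} (hA : MeasurableSet A) (R : ℝ) :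
    I t A (closedBall 0 R) ≤ ENNReal.ofReal (2 ^ (1 - t)) * I t A (closedBall 0 (R / 2)) := by
  unfold I
  rw [setL_eq measurableSet_closedBall, setL_eq measurableSet_closedBall,
    lint_smul (r := 2) (by norm_num)
      (iKg_meas t hA measurableSet_closedBall)]
  have key : ∀ x : V N, (closedBall 0 R).indicator (1 : V N → ℝ≥0∞) ((2:ℝ) • x) *
      (K N t ((2:ℝ) • x) * g A ((2:ℝ) • x)) ≤
      ENNReal.ofReal (2 ^ (-((N : ℝ) + t))) * 2 * ((closedBall 0 (R/2)).indicator 1 x *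
        (K N t x * g A x)) := by
    intro x
    have hi : (closedBall 0 R).indicator (1 : V N → ℝ≥0∞) ((2:ℝ) • x) =
        (closedBall 0 (R/2)).indicator (1 : V N → ℝ≥0∞) x := by
      have : ((2:ℝ) • x ∈ closedBall (0 : V N) R) ↔ x ∈ closedBall (0 : V N) (R/2) := by
        simp only [mem_closedBall, dist_zero_right, norm_smul, Real.norm_ofNat]
        constructor <;> intro h <;> linarith
      by_cases hx : x ∈ closedBall (0 : V N) (R/2)
      · rw [Set.indicator_of_mem hx, Set.indicator_of_mem (this.2 hx)]; rfl
      · rw [Set.indicator_of_notMem hx, Set.indicator_of_notMem (fun h => hx (this.1 h))]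
    rw [hi, K_smul t (by norm_num)]
    calc _ ≤ (closedBall 0 (R/2)).indicator (1 : V N → ℝ≥0∞) x *
        (ENNReal.ofReal (2 ^ (-((N : ℝ) + t))) * K N t x * (2 * g A x)) := by
          gcongr; exact g_two hA x
      _ = _ := by ring
  calc _ ≤ ENNReal.ofReal (2 ^ N) * ∫⁻ x, ENNReal.ofReal (2 ^ (-((N : ℝ) + t))) * 2 *
        ((closedBall 0 (R/2)).indicator 1 x * (K N t x * g A x)) := by
        exact mul_le_mul_right (lintegral_mono key) _
    _ = _ := by
        rw [lintegral_const_mul _ (iKg_meas t hA measurableSet_closedBall), ← mul_assoc,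
          ← mul_assoc, ← ENNReal.ofReal_mul (by positivity), pow_comb N t (by norm_num)]
        congr 1
        have : (2 : ℝ≥0∞) = ENNReal.ofReal 2 := by simp
        rw [this, ← ENNReal.ofReal_mul (by positivity)]
        congr 1
        rw [sub_eq_neg_add, Real.rpow_add (by norm_num), Real.rpow_one]

def ann {N : ℕ} (R : ℝ) : Set (V N) := closedBall 0 R \ closedBall 0 (R / 2)

lemma ann_le {N : ℕ} {t : ℝ} (ht0 : 0 < t) (ht : t < 1) {A : Set (V N)} (hA : MeasurableSet A)
    (hP : fracPer N t A < ⊤) {R : ℝ} (hR : 0 < R) :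
    I t A (ann R) ≤ ENNReal.ofReal (1 - t) * fracPer N t A := by
  have hu : closedBall (0 : V N) R = closedBall 0 (R/2) ∪ ann R := by
    rw [ann, Set.union_sdiff_cancel (closedBall_subset_closedBall (by linarith))]
  have h1 : I t A (closedBall 0 R) = I t A (closedBall 0 (R/2)) + I t A (ann R) := by
    conv_lhs => rw [hu]
    unfold I
    exact lintegral_union (measurableSet_closedBall.diff measurableSet_closedBall)
      Set.disjoint_sdiff_right
  have h2 := I_scale t hA R
  have hfin : I t A (closedBall 0 (R/2)) ≠ ⊤ := ((I_le t hA _).trans_lt hP).ne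
  have h3 : ENNReal.ofReal (2 ^ (1 - t)) ≤ 1 + ENNReal.ofReal (1 - t) := by
    rw [← ENNReal.ofReal_one, ← ENNReal.ofReal_add (by norm_num) (by linarith)]
    apply ENNReal.ofReal_le_ofReal
    have := _root_.rpow_one_add_le_one_add_mul_self (s := 1) (by norm_num) (p := 1 - t) (by linarith)
      (by linarith)
    norm_num at this ⊢
    linarith
  have h4 : I t A (closedBall 0 (R/2)) + I t A (ann R) ≤
      I t A (closedBall 0 (R/2)) + ENNReal.ofReal (1 - t) * I t A (closedBall 0 (R/2)) := by
    rw [← h1]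
    refine h2.trans ((mul_le_mul_left h3 _).trans (le_of_eq ?_))
    ring
  have h5 := (ENNReal.add_le_add_iff_left hfin).1 h4
  exact h5.trans (by gcongr; exact I_le t hA _)

lemma ann_s {N : ℕ} {s t : ℝ} (hst : s < t) {A : Set (V N)} (hA : MeasurableSet A)
    {R : ℝ} (hR : 0 < R) :
    I s A (ann R) ≤ ENNReal.ofReal (R ^ (t - s)) * I t A (ann R) := by
  unfold I
  rw [← lintegral_const_mul _ (Kg_meas t hA)]
  apply setLIntegral_mono' (measurableSet_closedBall.diff measurableSet_closedBall)
  intro h hh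
  rw [← mul_assoc]
  gcongr
  unfold K
  rw [← ENNReal.ofReal_mul (by positivity)]
  apply ENNReal.ofReal_le_ofReal
  simp only [ann, Set.mem_sdiff, mem_closedBall, dist_zero_right, not_le] at hh
  have hp : 0 < ‖h‖ := by linarith [hh.2]
  calc ‖h‖ ^ (-((N : ℝ) + s)) = ‖h‖ ^ (t - s) * ‖h‖ ^ (-((N : ℝ) + t)) := by
        rw [← Real.rpow_add hp]; congr 1; ring
    _ ≤ _ := by
        gcongr
        exact hh.1

lemma near {N : ℕ} {s t δ R : ℝ} (hs : 0 < s) (hst : s < t) (ht : t < 1) (hδ : 0 < δ)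
    (hd : δ ≤ t - s) (hR : 0 < R) (hR1 : R ≤ 1) (hRδ : R ^ δ = 1 - 2 ^ (-δ))
    {A : Set (V N)} (hA : MeasurableSet A) (hP : fracPer N t A < ⊤) :
    I s A (closedBall 0 R) ≤ ENNReal.ofReal (1 - t) * fracPer N t A := by
  have hsub : closedBall (0 : V N) R ⊆ {0} ∪ ⋃ k : ℕ, ann (R * (1/2) ^ k) := by
    intro h hh
    by_cases h0 : h = 0
    · left; exact h0
    right
    have hp : 0 < ‖h‖ := norm_pos_iff.2 h0
    simp only [mem_closedBall, dist_zero_right] at hh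
    obtain ⟨n, h1, h2⟩ := exists_nat_pow_near_of_lt_one (x := ‖h‖ / R) (y := 1/2) (by positivity)
      ((div_le_one hR).2 hh) (by norm_num) (by norm_num)
    rw [lt_div_iff₀ hR] at h1
    rw [div_le_iff₀ hR] at h2
    refine Set.mem_iUnion.2 ⟨n, ?_⟩
    simp only [ann, Set.mem_sdiff, mem_closedBall, dist_zero_right, not_le]
    constructor
    · linarith
    · rw [pow_succ] at h1; linarith
  have hq0 : (0:ℝ) < 2 ^ (-δ) := by positivity
  have hq1 : (2:ℝ) ^ (-δ) < 1 := Real.rpow_lt_one_of_one_lt_of_neg (by norm_num) (by linarith)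
  have hk : ∀ k : ℕ, I s A (ann (R * (1/2)^k)) ≤
      ENNReal.ofReal (R ^ δ) * ENNReal.ofReal (2 ^ (-δ)) ^ k *
        (ENNReal.ofReal (1 - t) * fracPer N t A) := by
    intro k
    have hRk : 0 < R * (1/2)^k := by positivity
    refine (ann_s hst hA hRk).trans ?_
    gcongr
    · rw [← ENNReal.ofReal_pow hq0.le, ← ENNReal.ofReal_mul (by positivity)]
      apply ENNReal.ofReal_le_ofReal
      calc (R * (1/2)^k) ^ (t - s) ≤ (R * (1/2)^k) ^ δ := by
            apply Real.rpow_le_rpow_of_exponent_ge hRk _ hd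
            exact mul_le_one₀ hR1 (by positivity) (pow_le_one₀ (by norm_num) (by norm_num))
        _ = _ := by
            rw [Real.mul_rpow hR.le (by positivity)]
            congr 1
            rw [← Real.rpow_natCast, ← Real.rpow_natCast, ← Real.rpow_mul (by norm_num),
              ← Real.rpow_mul (by norm_num), one_div, Real.inv_rpow (by norm_num),
              ← Real.rpow_neg (by norm_num)]
            congr 1; ring
    · exact ann_le (hs.trans hst) ht hA hP hRk
  calc I s A (closedBall 0 R) ≤ I s A ({0} ∪ ⋃ k : ℕ, ann (R * (1/2) ^ k)) :=
        lintegral_mono_set hsub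
    _ ≤ I s A {0} + I s A (⋃ k : ℕ, ann (R * (1/2) ^ k)) := lintegral_union_le _ _ _
    _ = I s A (⋃ k : ℕ, ann (R * (1/2) ^ k)) := by
        have : I s A {0} = 0 := by
          unfold I; rw [lintegral_singleton, K_zero hs]; simp
        rw [this, zero_add]
    _ ≤ ∑' k : ℕ, I s A (ann (R * (1/2)^k)) := lintegral_iUnion_le _ _
    _ ≤ ∑' k : ℕ, ENNReal.ofReal (R ^ δ) * ENNReal.ofReal (2 ^ (-δ)) ^ k *
        (ENNReal.ofReal (1 - t) * fracPer N t A) := ENNReal.tsum_le_tsum hk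
    _ = ENNReal.ofReal (1 - t) * fracPer N t A := by
        rw [ENNReal.tsum_mul_right, ENNReal.tsum_mul_left, ENNReal.tsum_geometric, hRδ,
          ENNReal.ofReal_sub _ hq0.le, ENNReal.ofReal_one, ENNReal.mul_inv_cancel, one_mul]
        · rw [← ENNReal.ofReal_one, ← ENNReal.ofReal_sub _ hq0.le]
          simpa using hq1
        · exact (tsub_le_self.trans_lt ENNReal.one_lt_top).ne

lemma far {N : ℕ} {s R : ℝ} (hs : 0 < s) (hs1 : s < 1) (hR : 0 < R) (hR1 : R ≤ 1) 
    {A : Set (V N)} (hA : MeasurableSet A) :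
    ENNReal.ofReal s * I s A (closedBall 0 R)ᶜ ≤
      ENNReal.ofReal (2 ^ (N+1) * R⁻¹) * volume (ball (0 : V N) 1) * volume A := by
  have hsub : (closedBall (0 : V N) R)ᶜ ⊆
      ⋃ k : ℕ, (closedBall 0 (R * 2 ^ (k+1)) \ ball 0 (R * 2 ^ k)) := by
    intro h hh
    simp only [Set.mem_compl_iff, mem_closedBall, dist_zero_right, not_le] at hh
    obtain ⟨n, h1, h2⟩ := exists_nat_pow_near (x := ‖h‖ / R) (y := 2) ((one_le_div hR).2 hh.le)
      (by norm_num)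
    rw [le_div_iff₀ hR] at h1
    rw [div_lt_iff₀ hR] at h2
    refine Set.mem_iUnion.2 ⟨n, ?_⟩
    simp only [Set.mem_sdiff, mem_closedBall, mem_ball, dist_zero_right, not_lt]
    constructor <;> linarith
  have hq0 : (0:ℝ) < 2 ^ (-s) := by positivity
  have hq1 : (2:ℝ) ^ (-s) < 1 := Real.rpow_lt_one_of_one_lt_of_neg (by norm_num) (by linarith)
  have hk : ∀ k : ℕ, I s A (closedBall 0 (R * 2 ^ (k+1)) \ ball 0 (R * 2 ^ k)) ≤
      ENNReal.ofReal (2 ^ (-s)) ^ k *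
        (ENNReal.ofReal (2 ^ N * R⁻¹) * volume (ball (0 : V N) 1) * volume A) := by
    intro k
    have hRk : 0 < R * 2^k := by positivity
    calc I s A (closedBall 0 (R * 2 ^ (k+1)) \ ball 0 (R * 2 ^ k))
        ≤ ∫⁻ h in (closedBall (0 : V N) (R * 2 ^ (k+1)) \ ball 0 (R * 2 ^ k)),
          ENNReal.ofReal ((R * 2^k) ^ (-((N:ℝ) + s))) * volume A := by
          apply setLIntegral_mono' (measurableSet_closedBall.diff measurableSet_ball)
          intro h hh
          simp only [Set.mem_sdiff, mem_closedBall, mem_ball, dist_zero_right, not_lt] at hh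
          gcongr
          · unfold K
            apply ENNReal.ofReal_le_ofReal
            apply Real.rpow_le_rpow_of_nonpos hRk hh.2
            have : (0:ℝ) ≤ N := by positivity
            linarith
          · exact g_le hA h
      _ = ENNReal.ofReal ((R * 2^k) ^ (-((N:ℝ) + s))) * volume A *
          volume (closedBall (0 : V N) (R * 2 ^ (k+1)) \ ball 0 (R * 2 ^ k)) := by
          rw [setLIntegral_const]
      _ ≤ ENNReal.ofReal ((R * 2^k) ^ (-((N:ℝ) + s))) * volume A *
          (ENNReal.ofReal ((R * 2^(k+1))^N) * volume (ball (0 : V N) 1)) := by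
          gcongr
          refine (measure_mono Set.diff_subset).trans (le_of_eq ?_)
          rw [Measure.addHaar_closedBall _ _ (by positivity), finrank_euclideanSpace_fin]
      _ = (ENNReal.ofReal ((R * 2^k) ^ (-((N:ℝ) + s))) * ENNReal.ofReal ((R * 2^(k+1))^N)) * 
          (volume (ball (0 : V N) 1) * volume A) := by ring
      _ ≤ (ENNReal.ofReal (2 ^ (-s)) ^ k * ENNReal.ofReal (2 ^ N * R⁻¹)) *
          (volume (ball (0 : V N) 1) * volume A) := by
          apply mul_le_mul_left
          rw [← ENNReal.ofReal_pow hq0.le, ← ENNReal.ofReal_mul (by positivity),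
            ← ENNReal.ofReal_mul (by positivity)]
          apply ENNReal.ofReal_le_ofReal
          have e1 : (R * 2^(k+1))^N = 2^N * (R * 2^k)^N := by rw [← mul_pow]; ring
          have e2 : (R * 2^k) ^ (-s) = R ^ (-s) * (2 ^ (-s))^k := by
            rw [Real.mul_rpow hR.le (by positivity)]
            congr 1
            rw [← Real.rpow_natCast, ← Real.rpow_natCast, ← Real.rpow_mul (by norm_num),
              ← Real.rpow_mul (by norm_num)]
            congr 1; ring
          have e3 : R ^ (-s) ≤ R⁻¹ := by
            rw [← Real.rpow_neg_one]
            exact Real.rpow_le_rpow_of_exponent_ge hR hR1 (by linarith)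
          calc (R * 2^k) ^ (-((N:ℝ) + s)) * (R * 2^(k+1))^N
              = 2^N * ((R * 2^k)^N * (R * 2^k) ^ (-((N:ℝ) + s))) := by rw [e1]; ring
            _ = 2^N * (R ^ (-s) * (2 ^ (-s))^k) := by rw [pow_comb N s hRk, e2]
            _ ≤ 2^N * (R⁻¹ * (2 ^ (-s))^k) := by gcongr
            _ = _ := by ring
      _ = _ := by ring
  have hsum : ENNReal.ofReal s * (1 - ENNReal.ofReal (2 ^ (-s)))⁻¹ ≤ ENNReal.ofReal 2 := by
    rw [← ENNReal.ofReal_one, ← ENNReal.ofReal_sub _ hq0.le,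
      ← ENNReal.ofReal_inv_of_pos (by linarith), ← ENNReal.ofReal_mul hs.le]
    apply ENNReal.ofReal_le_ofReal
    rw [← div_eq_mul_inv, div_le_iff₀ (by linarith)]
    have := _root_.rpow_one_add_le_one_add_mul_self (s := -1/2) (by norm_num) (p := s) (by linarith)
      (by linarith)
    have e : (1 + -1/2 : ℝ) ^ s = 2 ^ (-s) := by
      rw [Real.rpow_neg (by norm_num), ← Real.inv_rpow (by norm_num)]; norm_num
    rw [e] at this
    linarith
  calc ENNReal.ofReal s * I s A (closedBall 0 R)ᶜ
      ≤ ENNReal.ofReal s * ∑' k : ℕ, I s A (closedBall 0 (R * 2 ^ (k+1)) \ ball 0 (R * 2 ^ k)) := by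
        gcongr
        exact (lintegral_mono_set hsub).trans (lintegral_iUnion_le _ _)
    _ ≤ ENNReal.ofReal s * ∑' k : ℕ, ENNReal.ofReal (2 ^ (-s)) ^ k *
        (ENNReal.ofReal (2 ^ N * R⁻¹) * volume (ball (0 : V N) 1) * volume A) := by
        gcongr with k; exact hk k
    _ = (ENNReal.ofReal s * (1 - ENNReal.ofReal (2 ^ (-s)))⁻¹) *
        (ENNReal.ofReal (2 ^ N * R⁻¹) * volume (ball (0 : V N) 1) * volume A) := by
        rw [ENNReal.tsum_mul_right, ENNReal.tsum_geometric, ← mul_assoc (ENNReal.ofReal s)]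
    _ ≤ ENNReal.ofReal 2 * (ENNReal.ofReal (2 ^ N * R⁻¹) * volume (ball (0 : V N) 1) * volume A) := by
        gcongr
    _ = _ := by
        rw [← mul_assoc, ← mul_assoc, ← ENNReal.ofReal_mul (by norm_num)]
        congr 3; ring

lemma main_ineq {N : ℕ} {s t δ R : ℝ} (hs : 0 < s) (hst : s < t) (ht : t < 1) (hδ : 0 < δ)
    (hd : δ ≤ t - s) (hR : 0 < R) (hR1 : R ≤ 1) (hRδ : R ^ δ = 1 - 2 ^ (-δ))
    {A : Set (V N)} (hA : MeasurableSet A) (hP : fracPer N t A < ⊤) :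
    ENNReal.ofReal s * fracPer N s A ≤ ENNReal.ofReal (1 - t) * fracPer N t A +
      ENNReal.ofReal (2 ^ (N+1) * R⁻¹) * volume (ball (0 : V N) 1) * volume A := by
  have e : fracPer N s A = I s A (closedBall 0 R) + I s A (closedBall 0 R)ᶜ := by
    rw [fracPer_eq s hA]
    exact (lintegral_add_compl _ measurableSet_closedBall).symm
  rw [e, mul_add]
  refine add_le_add ?_ (far hs (hst.trans ht) hR hR1 hA)
  refine (mul_le_of_le_one_left' ?_).trans (near hs hst ht hδ hd hR hR1 hRδ hA hP)
  simpa using (hst.trans ht).le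

lemma lower {N : ℕ} {s t δ R m : ℝ} (hs : 0 < s) (hst : s < t) (ht : t < 1) (hδ : 0 < δ)
    (hd : δ ≤ t - s) (hR : 0 < R) (hR1 : R ≤ 1) (hRδ : R ^ δ = 1 - 2 ^ (-δ)) (hm : 0 < m)
    {A : Set (V N)} (hA : MeasurableSet A) (hP : fracPer N t A < ⊤)
    (hv : volume A = ENNReal.ofReal m) :
    - (2 ^ (N+1) * R⁻¹ * (volume (ball (0 : V N) 1)).toReal) * m ≤ freeEnergy N s t A := by
  have h := main_ineq hs hst ht hδ hd hR hR1 hRδ hA hP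
  have f1 : ENNReal.ofReal (1 - t) * fracPer N t A ≠ ⊤ := ENNReal.mul_ne_top (by simp) hP.ne
  have f2 : ENNReal.ofReal (2 ^ (N+1) * R⁻¹) * volume (ball (0 : V N) 1) * volume A ≠ ⊤ := by
    rw [hv]
    exact ENNReal.mul_ne_top (ENNReal.mul_ne_top ENNReal.ofReal_ne_top measure_ball_lt_top.ne) (by simp)
  have h' := ENNReal.toReal_mono (ENNReal.add_ne_top.2 ⟨f1, f2⟩) h
  rw [ENNReal.toReal_add f1 f2, hv] at h'
  simp only [ENNReal.toReal_mul] at h'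
  rw [ENNReal.toReal_ofReal hs.le, ENNReal.toReal_ofReal (by linarith),
    ENNReal.toReal_ofReal (by positivity), ENNReal.toReal_ofReal hm.le] at h'
  unfold freeEnergy
  linarith


lemma ind_scale {N : ℕ} {r : ℝ} (hr : 0 < r) (x : V N) :
    (ball (0 : V N) r).indicator (1 : V N → ℝ≥0∞) (r • x) = (ball (0 : V N) 1).indicator 1 x ∧
    (ball (0 : V N) r)ᶜ.indicator (1 : V N → ℝ≥0∞) (r • x) =
      (ball (0 : V N) 1)ᶜ.indicator 1 x := by
  have : (r • x ∈ ball (0 : V N) r) ↔ x ∈ ball (0 : V N) 1 := by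
    simp only [mem_ball, dist_zero_right, norm_smul, Real.norm_of_nonneg hr.le]
    constructor
    · intro h; by_contra h'; nlinarith
    · intro h; nlinarith
  by_cases hx : x ∈ ball (0 : V N) 1
  · have h2 := this.2 hx
    simp only [Set.indicator, Set.mem_compl_iff, hx, h2]; simp
  · have h2 : r • x ∉ ball (0 : V N) r := fun h => hx (this.1 h)
    simp only [Set.indicator, Set.mem_compl_iff, hx, h2]; simp

lemma g_scale {N : ℕ} {r : ℝ} (hr : 0 < r) (h : V N) :
    g (ball 0 r) (r • h) = ENNReal.ofReal (r ^ N) * g (ball 0 1) h := by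
  unfold g
  rw [lint_smul hr (sec_meas measurableSet_ball (r • h))]
  congr 2; ext x
  rw [← smul_add, (ind_scale hr x).1, (ind_scale hr (x + h)).2]

lemma per_scale {N : ℕ} (α : ℝ) {r : ℝ} (hr : 0 < r) :
    fracPer N α (ball 0 r) = ENNReal.ofReal (r ^ ((N : ℝ) - α)) * fracPer N α (ball 0 1) := by
  rw [fracPer_eq α measurableSet_ball, fracPer_eq α measurableSet_ball,
    lint_smul hr (Kg_meas α measurableSet_ball)]
  have : ∀ x : V N, K N α (r • x) * g (ball 0 r) (r • x) =
      ENNReal.ofReal (r ^ (-((N : ℝ) + α))) * ENNReal.ofReal (r ^ N) *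
        (K N α x * g (ball 0 1) x) := by
    intro x; rw [g_scale hr, K_smul α hr]; ring
  simp_rw [this]
  rw [lintegral_const_mul _ (Kg_meas α measurableSet_ball), ← mul_assoc, ← mul_assoc,
    ← ENNReal.ofReal_mul (by positivity), ← ENNReal.ofReal_mul (by positivity),
    pow_comb N α hr, ← Real.rpow_natCast, ← Real.rpow_add hr]
  congr 3; ring

lemma g_ball {N : ℕ} (hN : 0 < N) (h : V N) (hh : ‖h‖ ≤ 1) :
    g (ball 0 1) h ≤ ENNReal.ofReal (N * ‖h‖) * volume (ball (0 : V N) 1) := by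
  have : Nonempty (Fin N) := ⟨⟨0, hN⟩⟩
  have hv := Measure.addHaar_ball (volume : Measure (V N)) 0 (r := 1 - ‖h‖) (by linarith)
  rw [finrank_euclideanSpace_fin] at hv
  calc g (ball 0 1) h ≤ ∫⁻ x, (ball (0 : V N) 1 \ ball 0 (1 - ‖h‖)).indicator 1 x := by
        apply lintegral_mono
        intro x
        by_cases h1 : x ∈ ball (0 : V N) 1
        · by_cases h2 : x ∈ ball (0 : V N) (1 - ‖h‖)
          · have : x + h ∈ ball (0 : V N) 1 := by
              simp only [mem_ball, dist_zero_right] at h2 ⊢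
              linarith [norm_add_le x h]
            simp only [Set.indicator, Set.mem_compl_iff, this]; simp
          · have : x ∈ ball (0 : V N) 1 \ ball 0 (1 - ‖h‖) := ⟨h1, h2⟩
            simp only [Set.indicator, this, h1, if_true]
            split_ifs <;> simp
        · simp only [Set.indicator, h1]; simp
    _ = volume (ball (0 : V N) 1 \ ball 0 (1 - ‖h‖)) :=
        lintegral_indicator_one (measurableSet_ball.diff measurableSet_ball)
    _ = volume (ball (0 : V N) 1) - ENNReal.ofReal ((1 - ‖h‖) ^ N) * volume (ball (0 : V N) 1) := by
        rw [measure_sdiff (ball_subset_ball (by linarith [norm_nonneg h]))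
          measurableSet_ball.nullMeasurableSet measure_ball_lt_top.ne, hv]
    _ ≤ _ := by
        rw [tsub_le_iff_right, ← add_mul, ← ENNReal.ofReal_add (by positivity)
          (pow_nonneg (by linarith) _)]
        apply le_mul_of_one_le_left'
        rw [← ENNReal.ofReal_one]
        apply ENNReal.ofReal_le_ofReal
        have := one_add_mul_le_pow (a := -‖h‖) (by linarith) N
        rw [← sub_eq_add_neg] at this
        linarith

lemma per_fin {N : ℕ} (hN : 0 < N) {t : ℝ} (ht0 : 0 < t) (ht : t < 1) :
    fracPer N t (ball 0 1) < ⊤ := by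
  have : Nonempty (Fin N) := ⟨⟨0, hN⟩⟩
  have e : fracPer N t (ball 0 1) = I t (ball (0 : V N) 1) (closedBall 0 1) +
      I t (ball (0 : V N) 1) (closedBall 0 1)ᶜ := by
    rw [fracPer_eq t measurableSet_ball]
    exact (lintegral_add_compl _ measurableSet_closedBall).symm
  rw [e]
  refine ENNReal.add_lt_top.2 ⟨?_, ?_⟩
  · have hint : IntegrableOn (fun x : V N => ‖x‖ ^ (1 - (N : ℝ) - t)) (ball 0 2) := by
      rw [integrableOn_fun_norm_addHaar volume (f := fun y => y ^ (1 - (N : ℝ) - t)),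
        finrank_euclideanSpace_fin]
      have h1 : IntegrableOn (fun y : ℝ => y ^ (-t)) (Set.Ioo 0 2) :=
        (intervalIntegral.integrableOn_Ioo_rpow_iff (by norm_num)).2 (by linarith)
      refine h1.congr_fun ?_ measurableSet_Ioo
      intro y hy
      dsimp only
      rw [smul_eq_mul, ← Real.rpow_natCast, ← Real.rpow_add hy.1, Nat.cast_sub hN]
      congr 1; push_cast; ring
    have hf : ∫⁻ x in ball (0 : V N) 2, ENNReal.ofReal (‖x‖ ^ (1 - (N : ℝ) - t)) < ⊤ := by
      have := hint.2
      rw [hasFiniteIntegral_iff_ofReal] at this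
      · exact this
      · exact Filter.Eventually.of_forall fun x => by positivity
    have hm : Measurable fun x : V N => ENNReal.ofReal (‖x‖ ^ (1 - (N : ℝ) - t)) := by fun_prop
    calc I t (ball 0 1) (closedBall 0 1)
        ≤ ∫⁻ x in closedBall (0 : V N) 1, (ENNReal.ofReal N * volume (ball (0 : V N) 1)) *
          ENNReal.ofReal (‖x‖ ^ (1 - (N : ℝ) - t)) := by
          apply setLIntegral_mono' measurableSet_closedBall
          intro h hh
          by_cases h0 : h = 0
          · rw [h0, K_zero ht0]; simp
          have hp : 0 < ‖h‖ := norm_pos_iff.2 h0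
          refine (mul_le_mul_right (g_ball hN h (by simpa using hh)) _).trans (le_of_eq ?_)
          have : ‖h‖ ^ (1 - (N : ℝ) - t) = ‖h‖ ^ (-((N : ℝ) + t)) * ‖h‖ := by
            nth_rw 3 [← Real.rpow_one ‖h‖]
            rw [← Real.rpow_add hp]; congr 1; ring
          rw [this, K, ENNReal.ofReal_mul (by positivity), ENNReal.ofReal_mul (by positivity)]
          ring
      _ ≤ ∫⁻ x in ball (0 : V N) 2, (ENNReal.ofReal N * volume (ball (0 : V N) 1)) *
          ENNReal.ofReal (‖x‖ ^ (1 - (N : ℝ) - t)) :=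
          lintegral_mono_set (closedBall_subset_ball (by norm_num))
      _ = (ENNReal.ofReal N * volume (ball (0 : V N) 1)) * ∫⁻ x in ball (0 : V N) 2,
          ENNReal.ofReal (‖x‖ ^ (1 - (N : ℝ) - t)) := lintegral_const_mul _ hm
      _ < ⊤ := ENNReal.mul_lt_top (ENNReal.mul_lt_top ENNReal.ofReal_lt_top measure_ball_lt_top) hf
  · have h := far (N := N) ht0 ht one_pos le_rfl (A := ball 0 1) measurableSet_ball
    have h2 : ENNReal.ofReal t * I t (ball (0 : V N) 1) (closedBall 0 1)ᶜ < ⊤ :=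
      h.trans_lt (ENNReal.mul_lt_top (ENNReal.mul_lt_top ENNReal.ofReal_lt_top measure_ball_lt_top)
        measure_ball_lt_top)
    by_contra h3
    rw [not_lt, top_le_iff] at h3
    rw [h3, ENNReal.mul_top (by simpa using ht0)] at h2
    exact lt_irrefl _ h2

lemma per_pos {N : ℕ} (hN : 0 < N) (t : ℝ) : fracPer N t (ball 0 1) ≠ 0 := by
  have : Nonempty (Fin N) := ⟨⟨0, hN⟩⟩
  rw [fracPer_eq t measurableSet_ball, Ne, lintegral_eq_zero_iff (Kg_meas t measurableSet_ball)]
  intro h0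
  have hpos : 0 < volume (closedBall (0 : V N) 2)ᶜ := by
    apply isClosed_closedBall.isOpen_compl.measure_pos volume
    obtain ⟨x, hx⟩ := NormedSpace.exists_lt_norm ℝ (V N) 2
    exact ⟨x, by simpa using hx⟩
  have hz : volume (closedBall (0 : V N) 2)ᶜ = 0 := by
    refine measure_mono_null ?_ (ae_iff.1 h0)
    intro h hh
    simp only [Set.mem_compl_iff, mem_closedBall, dist_zero_right, not_le] at hh
    have hg : g (ball 0 1) h = volume (ball (0 : V N) 1) := by
      rw [← lintegral_indicator_one measurableSet_ball, g]
      congr 1; ext x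
      by_cases hx : x ∈ ball (0 : V N) 1
      · have : x + h ∉ ball (0 : V N) 1 := by
          simp only [mem_ball, dist_zero_right] at hx ⊢
          have := norm_sub_le (x + h) x
          rw [add_sub_cancel_left] at this
          linarith
        simp only [Set.indicator, Set.mem_compl_iff, this]; simp
      · simp only [Set.indicator, hx]; simp
    simp only [Set.mem_setOf_eq, Pi.zero_apply, mul_eq_zero, hg, not_or]
    refine ⟨?_, (measure_ball_pos _ _ one_pos).ne'⟩
    unfold K
    have : 0 < ‖h‖ := by linarith
    have : 0 < ‖h‖ ^ (-((N : ℝ) + t)) := by positivity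
    simpa using this
  exact hpos.ne' hz

lemma ball_energy {N : ℕ} (s t : ℝ) {r : ℝ} (hr : 0 < r) :
    freeEnergy N s t (ball 0 r) = (1 - t) * (r ^ ((N : ℝ) - t) * (fracPer N t (ball 0 1)).toReal)
      - s * (r ^ ((N : ℝ) - s) * (fracPer N s (ball 0 1)).toReal) := by
  unfold freeEnergy
  rw [per_scale t hr, per_scale s hr, ENNReal.toReal_mul, ENNReal.toReal_mul,
    ENNReal.toReal_ofReal (by positivity), ENNReal.toReal_ofReal (by positivity)]

end FP

theorem stmt6 (N : ℕ) (hN : 0 < N) (δ₀ : ℝ) (hδ : δ₀ ∈ Set.Ioo (0 : ℝ) 1) :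
    ∃ c₀ : ℝ, 0 < c₀ ∧ ∀ s t : ℝ, 0 < s → s < t → t < 1 → δ₀ ≤ t - s →
      ∀ m : ℝ, 0 < m →
        -c₀ * m ≤ isoFn N s t m ∧
        isoFn N s t m ≤
          ((1 - t) * (fracPer N t (Metric.ball (0 : EuclideanSpace ℝ (Fin N)) 1)).toReal /
              (volume (Metric.ball (0 : EuclideanSpace ℝ (Fin N)) 1)).toReal ^
                (((N : ℝ) - t) / N)) *
            m ^ (((N : ℝ) - t) / N) *
            (1 -
              (s * (fracPer N s (Metric.ball (0 : EuclideanSpace ℝ (Fin N)) 1)).toReal /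
                  (volume (Metric.ball (0 : EuclideanSpace ℝ (Fin N)) 1)).toReal ^
                    (((N : ℝ) - s) / N)) /
                ((1 - t) * (fracPer N t (Metric.ball (0 : EuclideanSpace ℝ (Fin N)) 1)).toReal /
                  (volume (Metric.ball (0 : EuclideanSpace ℝ (Fin N)) 1)).toReal ^
                    (((N : ℝ) - t) / N)) *
                m ^ ((t - s) / N)) := by
  classical
  obtain ⟨hδ0, hδ1⟩ := hδ
  have hq0 : (0:ℝ) < 2 ^ (-δ₀) := by positivity
  have hq1 : (2:ℝ) ^ (-δ₀) < 1 := Real.rpow_lt_one_of_one_lt_of_neg (by norm_num) (by linarith)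
  obtain ⟨R, hR, hR1, hRδ⟩ : ∃ R : ℝ, 0 < R ∧ R ≤ 1 ∧ R ^ δ₀ = 1 - 2 ^ (-δ₀) := by
    have h1 : (0:ℝ) < 1 - 2 ^ (-δ₀) := by linarith
    refine ⟨(1 - 2 ^ (-δ₀)) ^ (1 / δ₀), by positivity, ?_, ?_⟩
    · exact Real.rpow_le_one h1.le (by linarith) (by positivity)
    · rw [← Real.rpow_mul h1.le, one_div, inv_mul_cancel₀ hδ0.ne', Real.rpow_one]
  have hω : 0 < (volume (Metric.ball (0 : EuclideanSpace ℝ (Fin N)) 1)).toReal :=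
    ENNReal.toReal_pos (Metric.measure_ball_pos _ _ one_pos).ne' measure_ball_lt_top.ne
  refine ⟨2 ^ (N+1) * R⁻¹ * (volume (Metric.ball (0 : EuclideanSpace ℝ (Fin N)) 1)).toReal,
    by positivity, ?_⟩
  intro s t hs hst ht hd m hm
  have hNr : (0:ℝ) < N := by exact_mod_cast hN
  have : Nonempty (Fin N) := ⟨⟨0, hN⟩⟩
  have hlow : ∀ x ∈ {x : ℝ | ∃ E : Set (EuclideanSpace ℝ (Fin N)), MeasurableSet E ∧
      volume E = ENNReal.ofReal m ∧ fracPer N t E < ⊤ ∧ x = freeEnergy N s t E},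
      -(2 ^ (N+1) * R⁻¹ * (volume (Metric.ball (0 : EuclideanSpace ℝ (Fin N)) 1)).toReal) * m
        ≤ x := by
    rintro x ⟨E, hE, hv, hP, rfl⟩
    exact FP.lower hs hst ht hδ0 hd hR hR1 hRδ hm hE hP hv
  have hPt : 0 < (fracPer N t (Metric.ball 0 1)).toReal :=
    ENNReal.toReal_pos (FP.per_pos hN t) (FP.per_fin hN (hs.trans hst) ht).ne
  set ω := (volume (Metric.ball (0 : EuclideanSpace ℝ (Fin N)) 1)).toReal with hωd
  set Pt := (fracPer N t (Metric.ball 0 1)).toReal with hPtd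
  set Ps := (fracPer N s (Metric.ball 0 1)).toReal with hPsd
  have hr : 0 < (m / ω) ^ (1 / (N:ℝ)) := by positivity
  have hrp : ∀ a : ℝ, ((m / ω) ^ (1 / (N:ℝ))) ^ a = m ^ (a / N) / ω ^ (a / N) := by
    intro a
    rw [← Real.rpow_mul (by positivity), Real.div_rpow hm.le hω.le, one_div_mul_eq_div]
  have hmem : freeEnergy N s t (Metric.ball 0 ((m / ω) ^ (1 / (N:ℝ)))) ∈
      {x : ℝ | ∃ E : Set (EuclideanSpace ℝ (Fin N)), MeasurableSet E ∧
      volume E = ENNReal.ofReal m ∧ fracPer N t E < ⊤ ∧ x = freeEnergy N s t E} := by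
    refine ⟨_, Metric.isOpen_ball.measurableSet, ?_, ?_, rfl⟩
    · rw [Measure.addHaar_ball_of_pos _ _ hr, finrank_euclideanSpace_fin,
        ← ENNReal.ofReal_toReal (measure_ball_lt_top (μ := volume)
          (x := (0 : EuclideanSpace ℝ (Fin N))) (r := 1)).ne, ← hωd,
        ← ENNReal.ofReal_mul (by positivity), ← Real.rpow_natCast, hrp, div_self hNr.ne',
        Real.rpow_one, Real.rpow_one, div_mul_cancel₀ _ hω.ne']
    · rw [FP.per_scale t hr]
      exact ENNReal.mul_lt_top ENNReal.ofReal_lt_top (FP.per_fin hN (hs.trans hst) ht)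
  refine ⟨le_csInf ⟨_, hmem⟩ hlow, (csInf_le ⟨_, hlow⟩ hmem).trans (le_of_eq ?_)⟩
  rw [FP.ball_energy s t hr, hrp, hrp, ← hPtd, ← hPsd]
  have e : m ^ (((N:ℝ) - s) / N) = m ^ (((N:ℝ) - t) / N) * m ^ ((t - s) / N) := by
    rw [← Real.rpow_add hm]; congr 1; field_simp; ring
  rw [e]
  have h1 : 0 < ω ^ (((N:ℝ) - t) / N) := by positivity
  have h2 : 0 < ω ^ (((N:ℝ) - s) / N) := by positivity
  have h3 : 0 < 1 - t := by linarith
  generalize ω ^ (((N:ℝ) - t) / N) = a at *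
  generalize ω ^ (((N:ℝ) - s) / N) = b at *
  generalize 1 - t = c at *
  field_simp
end

section
/- Let N be a positive integer, δ₀ ∈ (0,1), and 0 < s < t < 1 with t − s ≥ δ₀. There exists ε > 0, depending only on N and δ₀, with the following property (non-optimality criterion): if F ⊆ ℝ^N is measurable with P_t(F) < ∞ and F = F₁ ∪ F₂ with F₁, F₂ measurable, |F₁ ∩ F₂| = 0, |F₁| > 0, 0 < |F₂| ≤ ε·min(1, |F₁|), and (1−t)·[P_t(F₁) + P_t(F₂) − P_t(F)] ≤ F_{s,t}(F₂)/2, then there exists a measurable set G with |G| = |F| and F_{s,t}(G) < F_{s,t}(F); moreover G can be taken to be either a ball of volume |F| or the dilation (1 + |F₂|/|F₁|)^{1/N} · F₁. -/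
open MeasureTheory ENNReal

namespace NO

noncomputable def K (N : ℕ) (α : ℝ) (h : EuclideanSpace ℝ (Fin N)) : ℝ≥0∞ :=
  ENNReal.ofReal (‖h‖ ^ (-((N : ℝ) + α)))

noncomputable def phi {N : ℕ} (A : Set (EuclideanSpace ℝ (Fin N)))
    (h : EuclideanSpace ℝ (Fin N)) : ℝ≥0∞ :=
  ∫⁻ x in A, Aᶜ.indicator 1 (x + h)

def ann (N : ℕ) (R : ℝ) : Set (EuclideanSpace ℝ (Fin N)) := {h | R ≤ ‖h‖ ∧ ‖h‖ < 2 * R}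

lemma measurable_K (N : ℕ) (α : ℝ) : Measurable (K N α) := by
  unfold K; fun_prop

lemma measurableSet_ann (N : ℕ) (R : ℝ) : MeasurableSet (ann N R) :=
  (measurableSet_le measurable_const measurable_norm).inter
    (measurableSet_lt measurable_norm measurable_const)

variable {N : ℕ} {A : Set (EuclideanSpace ℝ (Fin N))}

lemma measurable_aux (hA : MeasurableSet A) :
    Measurable (fun p : EuclideanSpace ℝ (Fin N) × EuclideanSpace ℝ (Fin N) =>
      (Aᶜ.indicator 1 (p.1 + p.2) : ℝ≥0∞)) :=
  (measurable_one.indicator hA.compl).comp (measurable_fst.add measurable_snd)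

lemma measurable_phi (hA : MeasurableSet A) : Measurable (phi A) := by
  unfold phi
  exact (measurable_aux hA).lintegral_prod_left'

lemma fracPer_eq (hA : MeasurableSet A) (α : ℝ) :
    fracPer N α A = ∫⁻ h, phi A h * K N α h := by
  unfold fracPer interEnergy
  have h1 : ∀ x : EuclideanSpace ℝ (Fin N),
      ∫⁻ y in Aᶜ, ENNReal.ofReal (‖x - y‖ ^ (-((N : ℝ) + α)))
        = ∫⁻ h, Aᶜ.indicator 1 (x + h) * K N α h := by
    intro x
    rw [← lintegral_indicator hA.compl,
      ← lintegral_add_left_eq_self _ x]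
    congr 1
    ext h
    by_cases hx : x + h ∈ Aᶜ
    · simp only [Set.indicator_of_mem hx, K]; simp
    · simp only [Set.indicator_of_notMem hx]; simp
  simp_rw [h1]
  rw [lintegral_lintegral_swap]
  · congr 1
    ext h
    rw [lintegral_mul_const]
    · rfl
    · exact (measurable_one.indicator hA.compl).comp (measurable_id.add_const h)
  · exact ((measurable_aux hA).mul ((measurable_K N α).comp measurable_snd)).aemeasurable

lemma phi_le (h) : phi A h ≤ volume A := by
  unfold phi
  calc ∫⁻ x in A, (Aᶜ.indicator 1 (x + h) : ℝ≥0∞) ≤ ∫⁻ x in A, (1 : ℝ≥0∞) := by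
        refine lintegral_mono (fun x => ?_)
        simp only [Set.indicator]; split_ifs <;> simp
    _ = volume A := by simp

lemma phi_two (hA : MeasurableSet A) (h) : phi A ((2:ℝ) • h) ≤ 2 * phi A h := by
  unfold phi
  have m : ∀ k, Measurable (fun x => (Aᶜ.indicator 1 (x + k) : ℝ≥0∞)) := fun k =>
    (measurable_one.indicator hA.compl).comp (measurable_id.add_const k)
  have e : ∫⁻ x, A.indicator (fun x => (Aᶜ.indicator 1 (x + h) : ℝ≥0∞)) (x + h)
      = ∫⁻ x in A, (Aᶜ.indicator 1 (x + h) : ℝ≥0∞) := by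
    rw [lintegral_add_right_eq_self (fun x => A.indicator (fun x => (Aᶜ.indicator 1 (x + h) : ℝ≥0∞)) x),
      lintegral_indicator hA]
  rw [two_mul]
  nth_rewrite 2 [← e]
  simp only [← lintegral_indicator hA]
  rw [← lintegral_add_left ((m h).indicator hA)]
  refine lintegral_mono fun x => ?_
  have : x + (2:ℝ) • h = x + h + h := by rw [two_smul]; abel
  simp only [Set.indicator, this, Pi.one_apply, Set.mem_compl_iff]
  split_ifs <;> simp_all

lemma phi_lower (hA : MeasurableSet A) (D : Set (EuclideanSpace ℝ (Fin N))) :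
    volume A * volume D ≤ (∫⁻ h in D, phi A h) + volume A * volume A := by
  have h1 : ∀ h, volume A = phi A h + ∫⁻ x in A, (A.indicator 1 (x + h) : ℝ≥0∞) := by
    intro h
    unfold phi
    rw [← lintegral_add_left]
    · rw [← setLIntegral_one]
      congr 1
      ext x
      by_cases hx : x + h ∈ A <;> simp [hx]
    · exact (measurable_one.indicator hA.compl).comp (measurable_id.add_const h)
  calc volume A * volume D = ∫⁻ h in D, volume A := by simp
    _ = ∫⁻ h in D, (phi A h + ∫⁻ x in A, (A.indicator 1 (x + h) : ℝ≥0∞)) :=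
        lintegral_congr fun h => h1 h
    _ = (∫⁻ h in D, phi A h) + ∫⁻ h in D, ∫⁻ x in A, (A.indicator 1 (x + h) : ℝ≥0∞) :=
        lintegral_add_left (measurable_phi hA) _
    _ ≤ _ := by
        gcongr
        refine (setLIntegral_le_lintegral _ _).trans ?_
        rw [lintegral_lintegral_swap]
        · have : ∀ x, ∫⁻ h, (A.indicator 1 (x + h) : ℝ≥0∞) = volume A := by
            intro x
            rw [lintegral_add_left_eq_self (fun y => (A.indicator 1 y : ℝ≥0∞)) x]
            simp [lintegral_indicator hA]
          simp [this]
        · exact ((measurable_one.indicator hA).comp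
            (measurable_snd.add measurable_fst)).aemeasurable

lemma vol_smul (c : ℝ) (hc : 0 < c) (S : Set (EuclideanSpace ℝ (Fin N))) :
    volume ((fun x => c • x) '' S) = ENNReal.ofReal (c ^ N) * volume S := by
  have := Measure.addHaar_smul (volume : Measure (EuclideanSpace ℝ (Fin N))) c S
  rw [finrank_euclideanSpace, Fintype.card_fin, abs_of_pos (by positivity)] at this
  exact this

lemma lintegral_smul (c : ℝ) (hc : 0 < c) (f : EuclideanSpace ℝ (Fin N) → ℝ≥0∞)
    (S : Set (EuclideanSpace ℝ (Fin N))) (hS : MeasurableSet S) (hf : Measurable f) :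
    ∫⁻ x in (fun x => c • x) '' S, f x = ENNReal.ofReal (c ^ N) * ∫⁻ x in S, f (c • x) := by
  have h1 := Measure.map_addHaar_smul (volume : Measure (EuclideanSpace ℝ (Fin N)))
    (ne_of_gt (inv_pos.2 hc))
  rw [finrank_euclideanSpace, Fintype.card_fin, abs_of_pos (by positivity)] at h1
  have hS' : (fun x => c • x) '' S = (fun x => c⁻¹ • x) ⁻¹' S := by
    ext x; constructor
    · rintro ⟨y, hy, rfl⟩; simpa [smul_smul, hc.ne'] using hy
    · intro hx; exact ⟨_, hx, by simp [smul_smul, hc.ne']⟩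
  have hms : MeasurableSet ((fun x : EuclideanSpace ℝ (Fin N) => c⁻¹ • x) ⁻¹' S) :=
    hS.preimage (measurable_const_smul _)
  rw [hS', ← lintegral_indicator hms, ← lintegral_indicator hS]
  have h2 : ∫⁻ x, ((fun x : EuclideanSpace ℝ (Fin N) => c⁻¹ • x) ⁻¹' S).indicator f x
     = ∫⁻ x, S.indicator (fun x => f (c • x)) (c⁻¹ • x) := by
    congr 1; ext x; simp [Set.indicator, smul_smul, hc.ne', Set.mem_preimage]; rfl
  rw [h2, ← lintegral_map (f := S.indicator (fun x => f (c • x))) _ (measurable_const_smul _), h1]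
  · simp
  · exact (hf.comp (measurable_const_smul _)).indicator hS

lemma K_smul (α c : ℝ) (hc : 0 < c) (h) :
    K N α (c • h) = ENNReal.ofReal (c ^ (-((N : ℝ) + α))) * K N α h := by
  unfold K
  rw [norm_smul, Real.norm_eq_abs, abs_of_pos hc, Real.mul_rpow hc.le (norm_nonneg _),
    ENNReal.ofReal_mul (by positivity)]

lemma image_compl (c : ℝ) (hc : 0 < c) :
   ((fun x : EuclideanSpace ℝ (Fin N) => c • x) '' A)ᶜ = (fun x => c • x) '' Aᶜ := by
  rw [Set.image_compl_eq]
  exact ⟨smul_right_injective _ hc.ne', fun y => ⟨c⁻¹ • y, by simp [smul_smul, hc.ne']⟩⟩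

lemma measurableSet_image (c : ℝ) (hA : MeasurableSet A) :
    MeasurableSet ((fun x : EuclideanSpace ℝ (Fin N) => c • x) '' A) :=
  hA.const_smul₀ c

lemma fracPer_smul (α c : ℝ) (hc : 0 < c) (hA : MeasurableSet A) :
    fracPer N α ((fun x => c • x) '' A) = ENNReal.ofReal (c ^ ((N : ℝ) - α)) * fracPer N α A := by
  unfold fracPer interEnergy
  rw [image_compl c hc]
  change ∫⁻ x in _, ∫⁻ y in _, K N α (x - y) = _ * ∫⁻ x in _, ∫⁻ y in _, K N α (x - y)
  have mK : Measurable (fun p : EuclideanSpace ℝ (Fin N) × EuclideanSpace ℝ (Fin N) =>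
      K N α (p.1 - p.2)) := (measurable_K N α).comp (measurable_fst.sub measurable_snd)
  rw [lintegral_smul c hc _ _ hA mK.lintegral_prod_right']
  have : ∀ x, ∫⁻ y in (fun x => c • x) '' Aᶜ, K N α (c • x - y) =
     ENNReal.ofReal (c ^ N) * (ENNReal.ofReal (c ^ (-((N : ℝ) + α))) *
       ∫⁻ y in Aᶜ, K N α (x - y)) := by
    intro x
    have m1 : ∀ z, Measurable (fun y => K N α (z - y)) := fun z =>
      (measurable_K N α).comp (measurable_const.sub measurable_id)
    rw [lintegral_smul c hc _ _ hA.compl (m1 _), ← lintegral_const_mul _ (m1 _)]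
    congr 2; ext y; rw [← smul_sub, K_smul _ _ hc]
  simp_rw [this]
  rw [lintegral_const_mul, lintegral_const_mul]
  · rw [← mul_assoc, ← mul_assoc, ← ENNReal.ofReal_mul (by positivity),
      ← ENNReal.ofReal_mul (by positivity)]
    congr 2
    rw [← Real.rpow_natCast, ← Real.rpow_add hc, ← Real.rpow_add hc]
    congr 1; ring
  · exact mK.lintegral_prod_right'
  · exact (mK.lintegral_prod_right').const_mul _


lemma ann_smul (c R : ℝ) (hc : 0 < c) : ann N (c * R) = (fun x => c • x) '' ann N R := by
  ext x; constructor
  · rintro ⟨h1, h2⟩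
    refine ⟨c⁻¹ • x, ⟨?_, ?_⟩, by simp [smul_smul, hc.ne']⟩
    · rw [norm_smul, Real.norm_eq_abs, abs_of_pos (inv_pos.2 hc), le_inv_mul_iff₀ hc]; exact h1
    · rw [norm_smul, Real.norm_eq_abs, abs_of_pos (inv_pos.2 hc), inv_mul_lt_iff₀ hc]; linarith
  · rintro ⟨y, ⟨h1, h2⟩, rfl⟩
    simp only [ann, Set.mem_ofPred_eq, norm_smul, Real.norm_eq_abs, abs_of_pos hc]
    constructor <;> nlinarith

lemma vol_ann (R : ℝ) (hR : 0 < R) :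
    volume (ann N R) = ENNReal.ofReal (R ^ N) * volume (ann N 1) := by
  rw [← vol_smul R hR, ← ann_smul R 1 hR, mul_one]

lemma vol_ann_lt_top : volume (ann N 1) < ⊤ := by
  refine (measure_mono (?_ : ann N 1 ⊆ Metric.ball 0 2)).trans_lt measure_ball_lt_top
  rintro x ⟨_, h⟩; simpa using h

lemma vol_ann_pos (hN : 0 < N) : 0 < volume (ann N 1) := by
  have : Nonempty (Fin N) := ⟨⟨0, hN⟩⟩
  obtain ⟨x, hx⟩ := exists_norm_eq (EuclideanSpace ℝ (Fin N)) (show (0:ℝ) ≤ 3/2 by norm_num)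
  have ho : IsOpen {h : EuclideanSpace ℝ (Fin N) | 1 < ‖h‖ ∧ ‖h‖ < 2} :=
    (isOpen_lt continuous_const continuous_norm).inter (isOpen_lt continuous_norm continuous_const)
  refine (ho.measure_pos volume ⟨x, ?_⟩).trans_le (measure_mono ?_)
  · simp only [Set.mem_ofPred_eq, hx]; norm_num
  · rintro y ⟨h1, h2⟩; exact ⟨h1.le, by linarith⟩

lemma measurable_pK (hA : MeasurableSet A) (t : ℝ) : Measurable (fun h => phi A h * K N t h) :=
  (measurable_phi hA).mul (measurable_K N t)

lemma ann_step (hA : MeasurableSet A) (t R : ℝ) :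
    ∫⁻ h in ann N (2 * R), phi A h * K N t h ≤
      ENNReal.ofReal (2 ^ (1 - t)) * ∫⁻ h in ann N R, phi A h * K N t h := by
  have m : Measurable (fun h => phi A h * K N t h) := (measurable_phi hA).mul (measurable_K N t)
  rw [ann_smul 2 R two_pos, lintegral_smul 2 two_pos _ _ (measurableSet_ann N R) m]
  have : ∫⁻ x in ann N R, phi A ((2:ℝ) • x) * K N t ((2:ℝ) • x) ≤
      ∫⁻ x in ann N R, (2 * ENNReal.ofReal (2 ^ (-((N : ℝ) + t)))) * (phi A x * K N t x) := by
    refine lintegral_mono fun x => ?_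
    simp only [K_smul t 2 two_pos]
    calc _ ≤ (2 * phi A x) * (ENNReal.ofReal (2 ^ (-((N : ℝ) + t))) * K N t x) := by
          gcongr; exact phi_two hA x
      _ = _ := by ring
  refine (mul_le_mul_right this _).trans ?_
  rw [lintegral_const_mul _ m, ← mul_assoc]
  gcongr
  rw [show (2 : ℝ≥0∞) = ENNReal.ofReal 2 by simp, ← ENNReal.ofReal_mul (by positivity),
    ← ENNReal.ofReal_mul (by positivity)]
  apply ENNReal.ofReal_le_ofReal
  rw [← Real.rpow_natCast]
  nth_rewrite 2 [← Real.rpow_one 2]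
  rw [← Real.rpow_add two_pos, ← Real.rpow_add two_pos]
  apply le_of_eq; congr 1; ring

lemma ann_iter (hA : MeasurableSet A) (t R : ℝ) (j : ℕ) :
    ENNReal.ofReal (2 ^ (-(1 - t))) ^ j * ∫⁻ h in ann N R, phi A h * K N t h ≤
      ∫⁻ h in ann N (R / 2 ^ j), phi A h * K N t h := by
  induction j with
  | zero => simp
  | succ j ih =>
    have h1 := ann_step hA t (R / 2 ^ (j+1))
    rw [show 2 * (R / 2 ^ (j+1)) = R / 2 ^ j by field_simp; ring] at h1
    have h2 := ih.trans h1
    calc _ = ENNReal.ofReal (2 ^ (-(1 - t))) * (ENNReal.ofReal (2 ^ (-(1 - t))) ^ j * ∫⁻ h in ann N R, phi A h * K N t h) := by ring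
      _ ≤ ENNReal.ofReal (2 ^ (-(1 - t))) * (ENNReal.ofReal (2 ^ (1 - t)) * ∫⁻ h in ann N (R / 2 ^ (j+1)), phi A h * K N t h) := by gcongr
      _ = _ := by
        rw [← mul_assoc, ← ENNReal.ofReal_mul (by positivity), ← Real.rpow_add two_pos]
        simp

lemma annA (hA : MeasurableSet A) (t R : ℝ) (hR : 0 < R) (ht0 : 0 < t) (ht : t < 1) :
    ∫⁻ h in ann N R, phi A h * K N t h ≤ ENNReal.ofReal (1 - t) * fracPer N t A := by
  rw [fracPer_eq hA]
  have hd : Pairwise (Function.onFun Disjoint fun j : ℕ => ann N (R / 2 ^ j)) := by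
    have key : ∀ i j : ℕ, i < j → Disjoint (ann N (R / 2 ^ i)) (ann N (R / 2 ^ j)) := by
      intro i j hij
      rw [Set.disjoint_left]
      rintro x ⟨h1, _⟩ ⟨_, h2⟩
      have h3 : (2:ℝ) ^ (i+1) ≤ 2 ^ j := pow_le_pow_right₀ (by norm_num) hij
      have h4 : 2 * (R / 2 ^ j) ≤ R / 2 ^ i := by
        rw [← mul_div_assoc, div_le_div_iff₀ (by positivity) (by positivity)]
        rw [pow_succ] at h3
        nlinarith
      linarith
    intro i j hij
    rcases lt_or_gt_of_ne hij with h | h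
    · exact key i j h
    · exact (key j i h).symm
  have h1 : ∑' j : ℕ, ∫⁻ h in ann N (R / 2 ^ j), phi A h * K N t h ≤ ∫⁻ h, phi A h * K N t h := by
    rw [← lintegral_iUnion (fun j => measurableSet_ann N _) hd]
    exact setLIntegral_le_lintegral _ _
  have h2 := (ENNReal.tsum_le_tsum fun j => ann_iter hA t R j).trans h1
  rw [ENNReal.tsum_mul_right, ENNReal.tsum_geometric] at h2
  have hq : (2:ℝ) ^ (-(1 - t)) < 1 := Real.rpow_lt_one_of_one_lt_of_neg (by norm_num) (by linarith)
  have hb : t ≤ (2:ℝ) ^ (-(1 - t)) := by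
    have := rpow_one_add_le_one_add_mul_self (s := 1) (p := 1 - t) (by norm_num) (by linarith) (by linarith)
    rw [Real.rpow_neg (by norm_num)]
    have h22 : (2:ℝ) ^ (1-t) ≤ 2 - t := by norm_num at this ⊢; linarith
    have h0 : (0:ℝ) < 2 ^ (1-t) := by positivity
    rw [le_inv_comm₀ ht0 h0]
    refine h22.trans ?_
    rw [le_inv_comm₀ (by linarith) ht0, le_inv_comm₀ ht0 (by linarith), inv_eq_one_div, le_div_iff₀ ht0]
    nlinarith [sq_nonneg (t-1)]
  have h1q : 1 - ENNReal.ofReal (2 ^ (-(1 - t))) = ENNReal.ofReal (1 - 2 ^ (-(1 - t))) := by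
    rw [ENNReal.ofReal_sub _ (by positivity)]; simp
  rw [h1q] at h2
  have hp : ENNReal.ofReal (1 - 2 ^ (-(1 - t))) ≠ 0 := by
    simp only [ne_eq, ENNReal.ofReal_eq_zero, not_le]; linarith
  calc _ = ENNReal.ofReal (1 - 2 ^ (-(1 - t))) * ((ENNReal.ofReal (1 - 2 ^ (-(1 - t))))⁻¹ * ∫⁻ h in ann N R, phi A h * K N t h) := by
        rw [← mul_assoc, ENNReal.mul_inv_cancel hp ENNReal.ofReal_ne_top, one_mul]
    _ ≤ ENNReal.ofReal (1 - 2 ^ (-(1 - t))) * ∫⁻ h, phi A h * K N t h := by gcongr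
    _ ≤ _ := by gcongr

lemma geo (a : ℝ) (h0 : 0 < a) (h1 : a ≤ 1) :
    ∑' j : ℕ, ENNReal.ofReal (2 ^ (-a)) ^ j ≤ ENNReal.ofReal (2 / a) := by
  rw [ENNReal.tsum_geometric]
  have := rpow_one_add_le_one_add_mul_self (s := -(1/2)) (p := a) (by norm_num) h0.le h1
  have h2 : (2:ℝ) ^ (-a) ≤ 1 - a / 2 := by
    rw [Real.rpow_neg (by norm_num), ← Real.inv_rpow (by norm_num)]
    norm_num at this ⊢; linarith
  have h1q : 1 - ENNReal.ofReal (2 ^ (-a)) = ENNReal.ofReal (1 - 2 ^ (-a)) := by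
    rw [ENNReal.ofReal_sub _ (by positivity)]; simp
  rw [h1q, show 2 / a = (a / 2)⁻¹ by field_simp, ENNReal.ofReal_inv_of_pos (by positivity)]
  rw [ENNReal.inv_le_inv]
  apply ENNReal.ofReal_le_ofReal; linarith

lemma exists_far (r R : ℝ) (hR : 0 < R) (h : R ≤ r) : ∃ j : ℕ, R * 2 ^ j ≤ r ∧ r < 2 * (R * 2 ^ j) := by
  obtain ⟨n, h1, h2⟩ := exists_nat_pow_near (x := r / R) (y := 2) (by rwa [le_div_iff₀ hR, one_mul]) (by norm_num)
  rw [le_div_iff₀ hR] at h1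
  rw [div_lt_iff₀ hR, pow_succ] at h2
  exact ⟨n, by linarith, by linarith⟩

lemma exists_near (r R : ℝ) (hr : 0 < r) (h : r < R) :
    ∃ j : ℕ, R / 2 ^ (j+1) ≤ r ∧ r < 2 * (R / 2 ^ (j + 1)) := by
  obtain ⟨n, h1, h2⟩ := exists_nat_pow_near (x := R / r) (y := 2) (by rw [le_div_iff₀ hr]; linarith) (by norm_num)
  rw [le_div_iff₀ hr] at h1
  rw [div_lt_iff₀ hr] at h2
  rcases h1.lt_or_eq with h1 | h1
  · refine ⟨n, ?_, ?_⟩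
    · rw [div_le_iff₀ (by positivity)]; linarith
    · rw [pow_succ, ← mul_div_assoc, lt_div_iff₀ (by positivity)]; nlinarith
  · rcases n with _ | n
    · simp at h1; linarith
    · refine ⟨n, ?_, ?_⟩
      · rw [div_le_iff₀ (by positivity)]; linarith
      · rw [← h1]; field_simp; linarith

lemma split (g : EuclideanSpace ℝ (Fin N) → ℝ≥0∞) (hg : g 0 = 0) (R : ℝ) (hR : 0 < R) :
    ∫⁻ h, g h ≤ (∑' j : ℕ, ∫⁻ h in ann N (R / 2 ^ (j+1)), g h) +
      ∑' j : ℕ, ∫⁻ h in ann N (R * 2 ^ j), g h := by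
  set U := (⋃ j : ℕ, ann N (R / 2 ^ (j+1))) ∪ ⋃ j : ℕ, ann N (R * 2 ^ j) with hU
  have mU : MeasurableSet U :=
    (MeasurableSet.iUnion fun j => measurableSet_ann N _).union
      (MeasurableSet.iUnion fun j => measurableSet_ann N _)
  have h1 : ∫⁻ h, g h = ∫⁻ h in U, g h := by
    rw [← lintegral_indicator mU]
    congr 1; ext h
    by_cases hh : h ∈ U
    · rw [Set.indicator_of_mem hh]
    · rw [Set.indicator_of_notMem hh]
      by_cases h0 : h = 0
      · rw [h0, hg]
      · exfalso; apply hh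
        rcases lt_or_ge ‖h‖ R with h3 | h3
        · obtain ⟨j, hj⟩ := exists_near ‖h‖ R (norm_pos_iff.2 h0) h3
          exact Or.inl (Set.mem_iUnion.2 ⟨j, hj⟩)
        · obtain ⟨j, hj⟩ := exists_far ‖h‖ R hR h3
          exact Or.inr (Set.mem_iUnion.2 ⟨j, hj⟩)
  rw [h1]
  refine (lintegral_union_le _ _ _).trans ?_
  gcongr
  · exact lintegral_iUnion_le _ _
  · exact lintegral_iUnion_le _ _

lemma K_zero (α : ℝ) (hα : 0 < α) : K N α 0 = 0 := by
  unfold K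
  rw [norm_zero, Real.zero_rpow (by have : (0:ℝ) ≤ N := by positivity
                                    linarith)]
  simp

lemma K_le (α ρ : ℝ) (hα : 0 < α) (hρ : 0 < ρ) (h) (hh : h ∈ ann N ρ) :
    K N α h ≤ ENNReal.ofReal (ρ ^ (-((N : ℝ) + α))) := by
  apply ENNReal.ofReal_le_ofReal
  exact Real.rpow_le_rpow_of_nonpos hρ hh.1 (by have : (0:ℝ) ≤ N := by positivity
                                                linarith)

lemma ann_const (f : EuclideanSpace ℝ (Fin N) → ℝ≥0∞) (M : ℝ≥0∞) (α ρ : ℝ) (hα : 0 < α) (hρ : 0 < ρ)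
    (hf : ∀ h ∈ ann N ρ, f h ≤ M) :
    ∫⁻ h in ann N ρ, f h * K N α h ≤ M * volume (ann N 1) * ENNReal.ofReal (ρ ^ (-α)) := by
  calc _ ≤ ∫⁻ h in ann N ρ, M * ENNReal.ofReal (ρ ^ (-((N : ℝ) + α))) :=
        setLIntegral_mono' (measurableSet_ann N ρ) fun h hh =>
          mul_le_mul' (hf h hh) (K_le α ρ hα hρ h hh)
    _ = M * volume (ann N 1) * (ENNReal.ofReal (ρ ^ (-((N : ℝ) + α))) * ENNReal.ofReal (ρ ^ N)) := by
        rw [setLIntegral_const, vol_ann ρ hρ]; ring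
    _ = _ := by
        rw [← ENNReal.ofReal_mul (by positivity), ← Real.rpow_natCast, ← Real.rpow_add hρ]
        congr 3; ring

lemma far (α R : ℝ) (hα : 0 < α) (hα1 : α ≤ 1) (hR : 0 < R) :
    ENNReal.ofReal α * ∑' j : ℕ, ∫⁻ h in ann N (R * 2 ^ j), phi A h * K N α h ≤
      2 * volume A * volume (ann N 1) * ENNReal.ofReal (R ^ (-α)) := by
  have h1 : ∀ j : ℕ, ∫⁻ h in ann N (R * 2 ^ j), phi A h * K N α h ≤
      volume A * volume (ann N 1) * ENNReal.ofReal (R ^ (-α)) * ENNReal.ofReal (2 ^ (-α)) ^ j := by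
    intro j
    refine (ann_const _ (volume A) α _ hα (by positivity) fun h _ => phi_le h).trans ?_
    rw [Real.mul_rpow hR.le (by positivity), ENNReal.ofReal_mul (by positivity),
      ← ENNReal.ofReal_pow (by positivity), ← Real.rpow_natCast, ← Real.rpow_natCast,
      ← Real.rpow_mul (by positivity), ← Real.rpow_mul (by positivity), mul_comm (j:ℝ), mul_assoc,
      mul_assoc, mul_assoc]
  calc _ ≤ ENNReal.ofReal α * ∑' j : ℕ, volume A * volume (ann N 1) * ENNReal.ofReal (R ^ (-α)) * ENNReal.ofReal (2 ^ (-α)) ^ j := by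
        gcongr; exact h1 _
    _ ≤ ENNReal.ofReal α * (volume A * volume (ann N 1) * ENNReal.ofReal (R ^ (-α)) * ENNReal.ofReal (2 / α)) := by
        rw [ENNReal.tsum_mul_left]; gcongr; exact geo α hα hα1
    _ = (ENNReal.ofReal α * ENNReal.ofReal (2 / α)) * (volume A * volume (ann N 1) * ENNReal.ofReal (R ^ (-α))) := by ring
    _ = _ := by
      rw [← ENNReal.ofReal_mul hα.le, mul_div_cancel₀ _ hα.ne']
      simp; ring

lemma near (hA : MeasurableSet A) (s t R : ℝ) (hs : 0 < s) (hst : s < t) (ht : t < 1) (hR : 0 < R) :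
    ∑' j : ℕ, ∫⁻ h in ann N (R / 2 ^ (j+1)), phi A h * K N s h ≤
      ENNReal.ofReal (R ^ (t - s)) * ENNReal.ofReal (2 / (t - s)) *
        (ENNReal.ofReal (1 - t) * fracPer N t A) := by
  have h1 : ∀ j : ℕ, ∫⁻ h in ann N (R / 2 ^ (j+1)), phi A h * K N s h ≤
      ENNReal.ofReal (R ^ (t - s)) * (ENNReal.ofReal (1 - t) * fracPer N t A) *
        ENNReal.ofReal (2 ^ (-(t-s))) ^ j := by
    intro j
    have hρ : 0 < R / 2 ^ (j+1) := by positivity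
    have hK : ∀ h ∈ ann N (R / 2 ^ (j+1)), phi A h * K N s h ≤
       ENNReal.ofReal ((R / 2 ^ j) ^ (t - s)) * (phi A h * K N t h) := by
      intro h hh
      have hpos : 0 < ‖h‖ := hρ.trans_le hh.1
      have : K N s h ≤ ENNReal.ofReal ((R / 2 ^ j) ^ (t - s)) * K N t h := by
        unfold K
        rw [← ENNReal.ofReal_mul (by positivity)]
        apply ENNReal.ofReal_le_ofReal
        rw [show -((N:ℝ) + s) = (t - s) + -((N:ℝ) + t) by ring, Real.rpow_add hpos]
        have hle : ‖h‖ ≤ R / 2 ^ j := by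
          refine hh.2.le.trans (le_of_eq ?_); field_simp; ring
        have := Real.rpow_le_rpow hpos.le hle (by linarith : 0 ≤ t - s)
        gcongr
      calc _ ≤ phi A h * (ENNReal.ofReal ((R / 2 ^ j) ^ (t - s)) * K N t h) := by gcongr
        _ = _ := by ring
    refine (setLIntegral_mono' (measurableSet_ann N _) hK).trans ?_
    rw [lintegral_const_mul _ (measurable_pK hA t)]
    refine (mul_le_mul_right (annA hA t _ hρ (hs.trans hst) ht) _).trans (le_of_eq ?_)
    have : ENNReal.ofReal ((R / 2 ^ j) ^ (t - s)) = ENNReal.ofReal (R ^ (t - s)) * ENNReal.ofReal (2 ^ (-(t-s))) ^ j := by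
      rw [← ENNReal.ofReal_pow (by positivity), ← ENNReal.ofReal_mul (by positivity)]
      congr 1
      rw [Real.div_rpow hR.le (by positivity), div_eq_mul_inv, ← Real.rpow_neg (by positivity)]
      congr 1
      rw [← Real.rpow_natCast, ← Real.rpow_natCast,
        ← Real.rpow_mul (by positivity), ← Real.rpow_mul (by positivity), mul_comm (j:ℝ)]
    rw [this]; ring
  refine (ENNReal.tsum_le_tsum h1).trans ?_
  rw [ENNReal.tsum_mul_left]
  calc _ ≤ ENNReal.ofReal (R ^ (t - s)) * (ENNReal.ofReal (1 - t) * fracPer N t A) * ENNReal.ofReal (2 / (t - s)) := by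
        gcongr; exact geo _ (by linarith) (by linarith)
    _ = _ := by ring

lemma interp (hA : MeasurableSet A) (s t R : ℝ) (hs : 0 < s) (hst : s < t) (ht : t < 1) (hR : 0 < R) :
    ENNReal.ofReal s * fracPer N s A ≤
      ENNReal.ofReal (R ^ (t - s)) * ENNReal.ofReal (2 / (t - s)) *
        (ENNReal.ofReal (1 - t) * fracPer N t A) +
      2 * volume A * volume (ann N 1) * ENNReal.ofReal (R ^ (-s)) := by
  rw [fracPer_eq hA s]
  refine (mul_le_mul_right (split _ (by rw [K_zero s hs, mul_zero]) R hR) _).trans ?_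
  rw [mul_add]
  refine add_le_add ?_ (far s R hs (by linarith) hR)
  refine le_trans ?_ (near hA s t R hs hst ht hR)
  refine mul_le_of_le_one_left (zero_le) ?_
  exact ENNReal.ofReal_le_one.2 (by linarith)

lemma iso (hA : MeasurableSet A) (t R : ℝ) (ht0 : 0 < t) (ht : t < 1) (hR : 0 < R)
    (hv : volume A < ⊤) (h2 : 2 * volume A ≤ volume (ann N R)) :
    volume A * volume (ann N 1) ≤
      ENNReal.ofReal (2 ^ (N + 2) * R ^ t) * (ENNReal.ofReal (1 - t) * fracPer N t A) := by
  have h1 := phi_lower hA (ann N R)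
  have hD : volume (ann N R) < ⊤ := by
    rw [vol_ann R hR]; exact ENNReal.mul_lt_top ENNReal.ofReal_lt_top vol_ann_lt_top
  have h3 : volume A * volume (ann N R) ≤ 2 * ∫⁻ h in ann N R, phi A h := by
    have h5 : volume A * volume (ann N R) + volume A * volume (ann N R) ≤
        2 * (∫⁻ h in ann N R, phi A h) + volume A * volume (ann N R) := by
      calc _ = 2 * (volume A * volume (ann N R)) := by ring
        _ ≤ 2 * ((∫⁻ h in ann N R, phi A h) + volume A * volume A) := by gcongr
        _ = 2 * (∫⁻ h in ann N R, phi A h) + volume A * (2 * volume A) := by ring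
        _ ≤ _ := by gcongr
    exact (ENNReal.add_le_add_iff_right (ENNReal.mul_lt_top hv hD).ne).1 h5
  have h4 : ∫⁻ h in ann N R, phi A h ≤
      ENNReal.ofReal ((2 * R) ^ ((N:ℝ) + t)) * (ENNReal.ofReal (1 - t) * fracPer N t A) := by
    refine le_trans ?_ (mul_le_mul_right (annA hA t R hR ht0 ht) _)
    rw [← lintegral_const_mul _ (measurable_pK hA t)]
    refine setLIntegral_mono' (measurableSet_ann N R) fun h hh => ?_
    have hpos : 0 < ‖h‖ := hR.trans_le hh.1
    have : 1 ≤ ENNReal.ofReal ((2 * R) ^ ((N:ℝ) + t)) * K N t h := by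
      unfold K
      rw [← ENNReal.ofReal_mul (by positivity), ENNReal.one_le_ofReal, Real.rpow_neg hpos.le,
        ← div_eq_mul_inv, one_le_div (by positivity)]
      exact Real.rpow_le_rpow hpos.le hh.2.le (by positivity)
    calc phi A h = phi A h * 1 := by simp
      _ ≤ phi A h * (ENNReal.ofReal ((2 * R) ^ ((N:ℝ) + t)) * K N t h) := by gcongr
      _ = _ := by ring
  have h6 := h3.trans (mul_le_mul_right h4 2)
  rw [vol_ann R hR] at h6
  have hRN : ENNReal.ofReal (R ^ N) ≠ 0 := by simp; positivity
  rw [← ENNReal.mul_le_mul_iff_right hRN ENNReal.ofReal_ne_top]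
  calc _ = volume A * (ENNReal.ofReal (R ^ N) * volume (ann N 1)) := by ring
    _ ≤ _ := h6
    _ = (ENNReal.ofReal 2 * ENNReal.ofReal ((2 * R) ^ ((N:ℝ) + t))) * (ENNReal.ofReal (1 - t) * fracPer N t A) := by simp; ring
    _ ≤ (ENNReal.ofReal (R ^ N) * ENNReal.ofReal (2 ^ (N + 2) * R ^ t)) * (ENNReal.ofReal (1 - t) * fracPer N t A) := by
      refine mul_le_mul_left ?_ _
      rw [← ENNReal.ofReal_mul (by positivity), ← ENNReal.ofReal_mul (by positivity)]
      apply ENNReal.ofReal_le_ofReal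
      rw [Real.mul_rpow (by positivity) hR.le, Real.rpow_add hR, Real.rpow_add two_pos,
        Real.rpow_natCast, Real.rpow_natCast]
      have : (2:ℝ) ^ t ≤ 2 := by
        calc (2:ℝ) ^ t ≤ 2 ^ (1:ℝ) := Real.rpow_le_rpow_of_exponent_le (by norm_num) ht.le
          _ = 2 := by simp
      have hp : 0 < R ^ N * R ^ t * 2 ^ N := by positivity
      rw [pow_add]
      nlinarith
    _ = _ := by ring

lemma phi_ball (hN : 0 < N) (h : EuclideanSpace ℝ (Fin N)) :
    phi (Metric.ball 0 1) h ≤ ENNReal.ofReal (N * ‖h‖) * volume (Metric.ball (0 : EuclideanSpace ℝ (Fin N)) 1) := by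
  have : Nonempty (Fin N) := ⟨⟨0, hN⟩⟩
  rcases le_or_gt 1 ‖h‖ with h1 | h1
  · refine (phi_le h).trans ?_
    refine le_mul_of_one_le_left zero_le ?_
    rw [ENNReal.one_le_ofReal]
    have : (1:ℝ) ≤ N := by exact_mod_cast hN
    nlinarith
  · set B := Metric.ball (0 : EuclideanSpace ℝ (Fin N)) 1
    set B' := Metric.ball (0 : EuclideanSpace ℝ (Fin N)) (1 - ‖h‖)
    have hB' : volume B' = ENNReal.ofReal ((1 - ‖h‖) ^ N) * volume B := by
      have := Measure.addHaar_ball (volume : Measure (EuclideanSpace ℝ (Fin N))) 0 (r := 1 - ‖h‖) (by linarith)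
      rwa [finrank_euclideanSpace, Fintype.card_fin] at this
    have hBB : B' ⊆ B := Metric.ball_subset_ball (by linarith [norm_nonneg h])
    have hBt : volume B < ⊤ := measure_ball_lt_top
    have h2 : phi B h ≤ volume (B \ B') := by
      unfold phi
      rw [← lintegral_indicator measurableSet_ball, ← lintegral_indicator_one (measurableSet_ball.diff measurableSet_ball)]
      refine lintegral_mono fun x => ?_
      change B.indicator (fun x => (Bᶜ.indicator 1 (x + h) : ℝ≥0∞)) x ≤ (B \ B').indicator 1 x
      by_cases hx : x ∈ B
      · by_cases hx' : x ∈ B'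
        · have h5 : x + h ∉ Bᶜ := by
            simp only [B, B', mem_ball_zero_iff, Set.mem_compl_iff, not_not] at hx' ⊢
            linarith [norm_add_le x h]
          rw [Set.indicator_of_mem hx, Set.indicator_of_notMem h5]; exact zero_le
        · have h6 : x ∈ B \ B' := ⟨hx, hx'⟩
          rw [Set.indicator_of_mem hx, Set.indicator_of_mem h6]
          by_cases h7 : x + h ∈ Bᶜ
          · rw [Set.indicator_of_mem h7]; simp
          · rw [Set.indicator_of_notMem h7]; exact zero_le
      · rw [Set.indicator_of_notMem hx]; exact zero_le
    refine h2.trans ?_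
    rw [measure_sdiff hBB measurableSet_ball.nullMeasurableSet (hBt.trans_le' (measure_mono hBB)).ne, hB']
    have h3 : 1 - N * ‖h‖ ≤ (1 - ‖h‖) ^ N := by
      have := one_add_mul_le_pow (a := -‖h‖) (by linarith) N
      calc 1 - N * ‖h‖ = 1 + N * -‖h‖ := by ring
        _ ≤ _ := this
        _ = _ := by ring
    rw [tsub_le_iff_left, ← add_mul, ← ENNReal.ofReal_add (pow_nonneg (by linarith) _) (by positivity)]
    refine le_mul_of_one_le_left zero_le ?_
    rw [ENNReal.one_le_ofReal]; linarith

lemma ball_bound (hN : 0 < N) (t δ : ℝ) (hδ : 0 < δ) (hδt : δ ≤ t) (ht : t < 1) :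
    ENNReal.ofReal (1 - t) * fracPer N t (Metric.ball 0 1) ≤
      ENNReal.ofReal (4 * N + 2 / δ) * (volume (Metric.ball (0 : EuclideanSpace ℝ (Fin N)) 1) * volume (ann N 1)) := by
  have ht0 : 0 < t := hδ.trans_le hδt
  set B := Metric.ball (0 : EuclideanSpace ℝ (Fin N)) 1
  rw [fracPer_eq measurableSet_ball]
  refine (mul_le_mul_right (split _ (by rw [K_zero t ht0, mul_zero]) 1 one_pos) _).trans ?_
  rw [mul_add, ENNReal.ofReal_add (by positivity) (by positivity), add_mul]
  refine add_le_add ?_ ?_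
  · have h1 : ∀ j : ℕ, ∫⁻ h in ann N (1 / 2 ^ (j+1)), phi B h * K N t h ≤
        ENNReal.ofReal (2 * N) * (volume B * volume (ann N 1)) * ENNReal.ofReal (2 ^ (-(1-t))) ^ j := by
      intro j
      have hρ : (0:ℝ) < 1 / 2 ^ (j+1) := by positivity
      refine (ann_const _ (ENNReal.ofReal (N * (2 * (1 / 2 ^ (j+1)))) * volume B) t _ ht0 hρ ?_).trans ?_
      · intro h hh
        refine (phi_ball hN h).trans ?_
        gcongr
        exact hh.2.le
      · calc _ = (ENNReal.ofReal (N * (2 * (1 / 2 ^ (j+1)))) * ENNReal.ofReal ((1 / 2 ^ (j+1)) ^ (-t))) * (volume B * volume (ann N 1)) := by ring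
          _ ≤ (ENNReal.ofReal (2 * N) * ENNReal.ofReal (2 ^ (-(1-t))) ^ j) * (volume B * volume (ann N 1)) := by
            refine mul_le_mul_left ?_ _
            rw [← ENNReal.ofReal_pow (by positivity), ← ENNReal.ofReal_mul (by positivity),
              ← ENNReal.ofReal_mul (by positivity)]
            apply ENNReal.ofReal_le_ofReal
            have e1 : (1 / 2 ^ (j+1) : ℝ) = 2 ^ (-((j:ℝ)+1)) := by
              rw [Real.rpow_neg (by norm_num), one_div]
              norm_cast
            have e2 : (1 / 2 ^ (j+1) : ℝ) * (1 / 2 ^ (j+1) : ℝ) ^ (-t) ≤ (2 ^ (-(1-t)) : ℝ) ^ j := by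
              rw [e1, ← Real.rpow_mul (by norm_num), ← Real.rpow_add two_pos, ← Real.rpow_natCast,
                ← Real.rpow_mul (by norm_num)]
              apply Real.rpow_le_rpow_of_exponent_le (by norm_num)
              nlinarith
            have hN0 : (0:ℝ) ≤ 2 * N := by positivity
            calc _ = 2 * N * ((1 / 2 ^ (j+1) : ℝ) * (1 / 2 ^ (j+1) : ℝ) ^ (-t)) := by ring
              _ ≤ _ := by gcongr
          _ = _ := by ring
    calc _ ≤ ENNReal.ofReal (1 - t) * ∑' j : ℕ, ENNReal.ofReal (2 * N) * (volume B * volume (ann N 1)) * ENNReal.ofReal (2 ^ (-(1-t))) ^ j := by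
          gcongr; exact h1 _
      _ ≤ ENNReal.ofReal (1 - t) * (ENNReal.ofReal (2 * N) * (volume B * volume (ann N 1)) * ENNReal.ofReal (2 / (1 - t))) := by
          rw [ENNReal.tsum_mul_left]; gcongr; exact geo _ (by linarith) (by linarith)
      _ = (ENNReal.ofReal (1 - t) * ENNReal.ofReal (2 / (1 - t)) * ENNReal.ofReal (2 * N)) * (volume B * volume (ann N 1)) := by ring
      _ = _ := by
        rw [← ENNReal.ofReal_mul (by linarith), mul_div_cancel₀ _ (by linarith), ← ENNReal.ofReal_mul (by norm_num)]
        congr 2; ring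
  · have h2 := far (A := B) t 1 ht0 ht.le one_pos
    simp only [Real.one_rpow, ENNReal.ofReal_one, mul_one] at h2
    calc _ ≤ ENNReal.ofReal (1 / δ * t) * ∑' j : ℕ, ∫⁻ h in ann N (1 * 2 ^ j), phi B h * K N t h := by
          gcongr
          have : 1 ≤ 1 / δ * t := by rw [one_div, le_inv_mul_iff₀ hδ]; linarith
          linarith
      _ = ENNReal.ofReal (1 / δ) * (ENNReal.ofReal t * ∑' j : ℕ, ∫⁻ h in ann N (1 * 2 ^ j), phi B h * K N t h) := by
          rw [ENNReal.ofReal_mul (by positivity), mul_assoc]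
      _ ≤ ENNReal.ofReal (1 / δ) * (2 * volume B * volume (ann N 1)) := by
          simp only [one_mul] at h2 ⊢
          gcongr
      _ = ENNReal.ofReal (1 / δ) * ENNReal.ofReal 2 * (volume B * volume (ann N 1)) := by simp; ring
      _ = _ := by
        rw [← ENNReal.ofReal_mul (by positivity)]; congr 2; ring


lemma fin_s (hA : MeasurableSet A) (s t : ℝ) (hs : 0 < s) (hst : s < t) (ht : t < 1)
    (hv : volume A < ⊤) (hP : fracPer N t A < ⊤) : fracPer N s A < ⊤ := by
  have h := interp hA s t 1 hs hst ht one_pos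
  have h2 : ENNReal.ofReal s * fracPer N s A < ⊤ := by
    refine h.trans_lt (ENNReal.add_lt_top.2 ⟨?_, ?_⟩)
    · exact ENNReal.mul_lt_top (ENNReal.mul_lt_top ENNReal.ofReal_lt_top ENNReal.ofReal_lt_top)
        (ENNReal.mul_lt_top ENNReal.ofReal_lt_top hP)
    · exact ENNReal.mul_lt_top (ENNReal.mul_lt_top (ENNReal.mul_lt_top (by simp) hv) vol_ann_lt_top)
        ENNReal.ofReal_lt_top
  by_contra hc
  rw [not_lt, top_le_iff] at hc
  rw [hc, ENNReal.mul_top (by simpa using hs)] at h2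
  exact lt_irrefl _ h2

lemma iso_real (hN : 0 < N) : ∃ C : ℝ, 0 < C ∧ ∀ (A : Set (EuclideanSpace ℝ (Fin N))) (t : ℝ),
    MeasurableSet A → 0 < t → t < 1 → 0 < volume A → volume A < ⊤ → fracPer N t A < ⊤ →
    (volume A).toReal ≤ C * (volume A).toReal ^ (t / N) * ((1 - t) * (fracPer N t A).toReal) := by
  set v := (volume (ann N 1)).toReal with hvdef
  have hv : 0 < v := ENNReal.toReal_pos (vol_ann_pos hN).ne' vol_ann_lt_top.ne
  have hve : volume (ann N 1) = ENNReal.ofReal v := (ENNReal.ofReal_toReal vol_ann_lt_top.ne).symm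
  set κ := max 1 (2 / v) with hκ
  have hκ1 : 1 ≤ κ := le_max_left _ _
  have hκ2 : 2 ≤ κ * v := by rw [← div_le_iff₀ hv]; exact le_max_right _ _
  refine ⟨2 ^ (N + 2) * κ / v, by positivity, ?_⟩
  intro A t hA ht0 ht hA0 hAt hP
  set m := (volume A).toReal with hm
  have hm0 : 0 < m := ENNReal.toReal_pos hA0.ne' hAt.ne
  have hme : volume A = ENNReal.ofReal m := (ENNReal.ofReal_toReal hAt.ne).symm
  have hNr : (0:ℝ) < N := by exact_mod_cast hN
  have hR : 0 < κ * m ^ (1 / (N:ℝ)) := by positivity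
  have hmN : (m ^ (1 / (N:ℝ))) ^ N = m := by
    rw [← Real.rpow_natCast, ← Real.rpow_mul hm0.le, one_div, inv_mul_cancel₀ hNr.ne', Real.rpow_one]
  have h := iso hA t (κ * m ^ (1 / (N:ℝ))) ht0 ht hR hAt ?_
  · have h2 := ENNReal.toReal_mono (ENNReal.mul_lt_top ENNReal.ofReal_lt_top
        (ENNReal.mul_lt_top ENNReal.ofReal_lt_top hP)).ne h
    rw [ENNReal.toReal_mul, ENNReal.toReal_mul, ENNReal.toReal_mul, ENNReal.toReal_ofReal (by positivity),
      ENNReal.toReal_ofReal (by linarith), ← hm, ← hvdef] at h2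
    have h3 : (κ * m ^ (1 / (N:ℝ))) ^ t ≤ κ * m ^ (t / N) := by
      rw [Real.mul_rpow (by positivity) (by positivity), ← Real.rpow_mul hm0.le]
      rw [show 1 / (N:ℝ) * t = t / N by ring]
      gcongr
      calc κ ^ t ≤ κ ^ (1:ℝ) := Real.rpow_le_rpow_of_exponent_le hκ1 ht.le
        _ = κ := Real.rpow_one _
    have hX : 0 ≤ (1 - t) * (fracPer N t A).toReal := mul_nonneg (by linarith) ENNReal.toReal_nonneg
    have h4 : m * v ≤ 2 ^ (N + 2) * (κ * m ^ (t / N)) * ((1 - t) * (fracPer N t A).toReal) := by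
      refine h2.trans ?_
      gcongr
    rw [← le_div_iff₀ hv] at h4
    refine h4.trans (le_of_eq ?_)
    ring
  · rw [vol_ann _ hR, hve, hme, ← ENNReal.ofReal_mul (by positivity),
      show (2:ℝ≥0∞) = ENNReal.ofReal 2 by simp, ← ENNReal.ofReal_mul (by positivity)]
    apply ENNReal.ofReal_le_ofReal
    rw [mul_pow, hmN]
    have : κ ≤ κ ^ N := le_self_pow₀ hκ1 hN.ne'
    calc 2 * m ≤ (κ * v) * m := by gcongr
      _ = κ * (m * v) := by ring
      _ ≤ κ ^ N * (m * v) := by gcongr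
      _ = _ := by ring

lemma interp_real (hN : 0 < N) (δ : ℝ) (hδ : 0 < δ) : ∃ C : ℝ, 0 < C ∧
    ∀ (A : Set (EuclideanSpace ℝ (Fin N))) (s t : ℝ),
    MeasurableSet A → 0 < s → s < t → t < 1 → δ ≤ t - s →
    0 < volume A → volume A < ⊤ → fracPer N t A < ⊤ →
    s * (fracPer N s A).toReal ≤
      C * (volume A).toReal ^ ((t - s) / N) * ((1 - t) * (fracPer N t A).toReal) := by
  obtain ⟨C, hC, H⟩ := iso_real hN
  set v := (volume (ann N 1)).toReal with hvdef
  have hv : 0 < v := ENNReal.toReal_pos (vol_ann_pos hN).ne' vol_ann_lt_top.ne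
  refine ⟨2 / δ + 2 * v * C, by positivity, ?_⟩
  intro A s t hA hs hst ht hd hA0 hAt hP
  have h0 := H A t hA (hs.trans hst) ht hA0 hAt hP
  set m := (volume A).toReal with hm
  have hm0 : 0 < m := ENNReal.toReal_pos hA0.ne' hAt.ne
  have hNr : (0:ℝ) < N := by exact_mod_cast hN
  have hR : 0 < m ^ (1 / (N:ℝ)) := by positivity
  have h := interp hA s t _ hs hst ht hR
  have f1 : ENNReal.ofReal ((m ^ (1 / (N:ℝ))) ^ (t - s)) * ENNReal.ofReal (2 / (t - s)) *
        (ENNReal.ofReal (1 - t) * fracPer N t A) < ⊤ :=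
    ENNReal.mul_lt_top (ENNReal.mul_lt_top ENNReal.ofReal_lt_top ENNReal.ofReal_lt_top)
        (ENNReal.mul_lt_top ENNReal.ofReal_lt_top hP)
  have f2 : 2 * volume A * volume (ann N 1) * ENNReal.ofReal ((m ^ (1 / (N:ℝ))) ^ (-s)) < ⊤ :=
    ENNReal.mul_lt_top (ENNReal.mul_lt_top (ENNReal.mul_lt_top (by simp) hAt) vol_ann_lt_top)
        ENNReal.ofReal_lt_top
  have h2 := ENNReal.toReal_mono (ENNReal.add_lt_top.2 ⟨f1, f2⟩).ne h
  rw [ENNReal.toReal_add f1.ne f2.ne] at h2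
  have hts : 0 < t - s := by linarith
  simp only [ENNReal.toReal_mul, ENNReal.toReal_ofReal hs.le, ENNReal.toReal_ofReal (by linarith : 0 ≤ 1 - t),
    ENNReal.toReal_ofReal (by positivity : 0 ≤ 2 / (t - s)),
    ENNReal.toReal_ofReal (by positivity : 0 ≤ (m ^ (1 / (N:ℝ))) ^ (t - s)),
    ENNReal.toReal_ofReal (by positivity : 0 ≤ (m ^ (1 / (N:ℝ))) ^ (-s)), ← hm, ← hvdef,
    ENNReal.toReal_ofNat] at h2
  have hX : 0 ≤ (1 - t) * (fracPer N t A).toReal := mul_nonneg (by linarith) ENNReal.toReal_nonneg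
  set X := (1 - t) * (fracPer N t A).toReal
  rw [← Real.rpow_mul hm0.le, ← Real.rpow_mul hm0.le, show 1 / (N:ℝ) * (t - s) = (t - s) / N by ring,
    show 1 / (N:ℝ) * (-s) = - (s / N) by ring] at h2
  have h3 : m * m ^ (-(s / N)) ≤ C * m ^ ((t - s) / N) * X := by
    calc m * m ^ (-(s / N)) ≤ (C * m ^ (t / N) * X) * m ^ (-(s / N)) := by gcongr
      _ = C * (m ^ (t / N) * m ^ (-(s / N))) * X := by ring
      _ = _ := by rw [← Real.rpow_add hm0]; congr 3; ring
  have h4 : 2 / (t - s) ≤ 2 / δ := by gcongr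
  calc _ ≤ _ := h2
    _ = m ^ ((t - s) / N) * (2 / (t - s)) * X + 2 * v * (m * m ^ (-(s / N))) := by ring
    _ ≤ m ^ ((t - s) / N) * (2 / δ) * X + 2 * v * (C * m ^ ((t - s) / N) * X) := by gcongr
    _ = _ := by ring

lemma ball_real (hN : 0 < N) (δ : ℝ) (hδ : 0 < δ) : ∃ C : ℝ, 0 < C ∧
    ∀ (M : ℝ), 0 < M → ∃ r : ℝ, volume (Metric.ball (0 : EuclideanSpace ℝ (Fin N)) r) = ENNReal.ofReal M ∧
    ∀ t : ℝ, δ ≤ t → t < 1 → fracPer N t (Metric.ball 0 r) < ⊤ ∧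
     (1 - t) * (fracPer N t (Metric.ball 0 r)).toReal ≤ C * M ^ (1 - t / N) := by
  set B := Metric.ball (0 : EuclideanSpace ℝ (Fin N)) 1 with hB
  set v := (volume (ann N 1)).toReal with hvdef
  have hv : 0 < v := ENNReal.toReal_pos (vol_ann_pos hN).ne' vol_ann_lt_top.ne
  set ω := (volume B).toReal with hω
  have hBt : volume B < ⊤ := measure_ball_lt_top
  have hω0 : 0 < ω := ENNReal.toReal_pos (Metric.measure_ball_pos _ _ one_pos).ne' hBt.ne
  have hωe : volume B = ENNReal.ofReal ω := (ENNReal.ofReal_toReal hBt.ne).symm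
  set κ := max 1 ω⁻¹ with hκ
  have hκ1 : 1 ≤ κ := le_max_left _ _
  have hNr : (0:ℝ) < N := by exact_mod_cast hN
  have hN1 : (1:ℝ) ≤ N := by exact_mod_cast hN
  refine ⟨κ * ((4 * N + 2 / δ) * (ω * v)), by positivity, fun M hM => ?_⟩
  set r := (M * ω⁻¹) ^ (1 / (N:ℝ)) with hr
  have hr0 : 0 < r := by positivity
  have him : Metric.ball (0 : EuclideanSpace ℝ (Fin N)) r = (fun x => r • x) '' B := by
    have := smul_unitBall (E := EuclideanSpace ℝ (Fin N)) hr0.ne'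
    rw [Real.norm_eq_abs, abs_of_pos hr0] at this
    exact this.symm
  refine ⟨r, ?_, fun t hδt ht => ?_⟩
  · rw [him, vol_smul r hr0, hωe, ← ENNReal.ofReal_mul (by positivity)]
    congr 1
    rw [hr, ← Real.rpow_natCast, ← Real.rpow_mul (by positivity), one_div, inv_mul_cancel₀ hNr.ne', Real.rpow_one]
    field_simp
  · rw [him, fracPer_smul t r hr0 measurableSet_ball]
    have h1 := ball_bound hN t δ hδ hδt ht
    have hf : ENNReal.ofReal (4 * N + 2 / δ) * (volume B * volume (ann N 1)) < ⊤ :=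
      ENNReal.mul_lt_top ENNReal.ofReal_lt_top (ENNReal.mul_lt_top hBt vol_ann_lt_top)
    have hfin : fracPer N t B < ⊤ := by
      by_contra hc
      rw [not_lt, top_le_iff] at hc
      have h2 := h1.trans_lt hf
      rw [hc, ENNReal.mul_top (by simpa using ht)] at h2
      exact lt_irrefl _ h2
    refine ⟨ENNReal.mul_lt_top ENNReal.ofReal_lt_top hfin, ?_⟩
    have h2 := ENNReal.toReal_mono hf.ne h1
    simp only [ENNReal.toReal_mul, ENNReal.toReal_ofReal (by linarith : 0 ≤ 1 - t),
      ENNReal.toReal_ofReal (by positivity : 0 ≤ 4 * (N:ℝ) + 2 / δ)] at h2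
    rw [ENNReal.toReal_mul, ENNReal.toReal_ofReal (by positivity)]
    have hθ : t / N ≤ 1 := by rw [div_le_one hNr]; linarith
    have hθ0 : 0 ≤ t / N := by apply div_nonneg <;> linarith
    have h3 : r ^ ((N:ℝ) - t) ≤ κ * M ^ (1 - t / N) := by
      rw [hr, ← Real.rpow_mul (by positivity), show 1 / (N:ℝ) * (N - t) = 1 - t / N by field_simp,
        Real.mul_rpow hM.le (by positivity), mul_comm]
      gcongr
      calc (ω⁻¹) ^ (1 - t / N) ≤ κ ^ (1 - t / N) :=
            Real.rpow_le_rpow (by positivity) (le_max_right _ _) (by linarith)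
        _ ≤ κ ^ (1:ℝ) := Real.rpow_le_rpow_of_exponent_le hκ1 (by linarith)
        _ = κ := Real.rpow_one _
    calc _ = r ^ ((N:ℝ) - t) * ((1 - t) * (fracPer N t B).toReal) := by ring
      _ ≤ (κ * M ^ (1 - t / N)) * ((4 * N + 2 / δ) * (ω * v)) := by
        apply mul_le_mul h3 h2
        · exact mul_nonneg (by linarith) ENNReal.toReal_nonneg
        · positivity
      _ = _ := by ring

lemma fracPer_union (α : ℝ) (F₁ F₂ : Set (EuclideanSpace ℝ (Fin N))) :
    fracPer N α (F₁ ∪ F₂) ≤ fracPer N α F₁ + fracPer N α F₂ := by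
  unfold fracPer interEnergy
  refine (lintegral_union_le _ _ _).trans ?_
  gcongr
  · exact Set.subset_union_left
  · exact Set.subset_union_right

set_option maxHeartbeats 1000000 in
lemma main_real (N : ℕ) (hN : 0 < N) (δ₀ : ℝ) (hδ : δ₀ ∈ Set.Ioo (0 : ℝ) 1) :
    ∃ ε : ℝ, 0 < ε ∧
      ∀ s t : ℝ, 0 < s → s < t → t < 1 → δ₀ ≤ t - s →
        ∀ F F₁ F₂ : Set (EuclideanSpace ℝ (Fin N)),
          MeasurableSet F₁ → MeasurableSet F₂ → F = F₁ ∪ F₂ →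
          volume (F₁ ∩ F₂) = 0 → fracPer N t F < ⊤ → volume F < ⊤ →
          0 < volume F₁ → 0 < volume F₂ →
          volume F₂ ≤ ENNReal.ofReal ε * min 1 (volume F₁) →
          ENNReal.ofReal (1 - t) * (fracPer N t F₁ + fracPer N t F₂ - fracPer N t F) ≤
            ENNReal.ofReal (freeEnergy N s t F₂ / 2) →
          ∃ G : Set (EuclideanSpace ℝ (Fin N)), MeasurableSet G ∧
            volume G = volume F ∧ fracPer N t G < ⊤ ∧
            freeEnergy N s t G < freeEnergy N s t F ∧
            ((∃ (z : EuclideanSpace ℝ (Fin N)) (r : ℝ), G = Metric.ball z r) ∨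
              G = (fun x => ((1 + (volume F₂).toReal / (volume F₁).toReal) ^ ((1 : ℝ) / N)) • x) ''
                F₁) := by
  obtain ⟨hδ0, hδ1⟩ := hδ
  obtain ⟨C₁, hC₁, H₁⟩ := iso_real hN
  obtain ⟨C₂, hC₂, H₂⟩ := interp_real hN δ₀ hδ0
  obtain ⟨C₃, hC₃, H₃⟩ := ball_real hN δ₀ hδ0
  have hNr : (0:ℝ) < N := by exact_mod_cast hN
  have hN1 : (1:ℝ) ≤ N := by exact_mod_cast hN
  set Q := 1 + 2 * C₂ + 8 * C₃ * C₁ with hQ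
  have hQ1 : 1 ≤ Q := by
    have : 0 < 2 * C₂ + 8 * C₃ * C₁ := by positivity
    linarith
  have hQ0 : 0 < Q := by linarith
  set ε := (Q⁻¹) ^ ((N:ℝ) / δ₀) with hε
  have hε0 : 0 < ε := by positivity
  have hε1 : ε ≤ 1 := Real.rpow_le_one (by positivity) (inv_le_one_of_one_le₀ hQ1) (by positivity)
  have hεp : ∀ u : ℝ, δ₀ ≤ u → ∀ x : ℝ, 0 < x → x ≤ ε → x ^ (u / N) ≤ Q⁻¹ := by
    intro u hu x hx hxe
    calc x ^ (u / N) ≤ ε ^ (u / N) := Real.rpow_le_rpow hx.le hxe (div_nonneg (by linarith) hNr.le)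
      _ ≤ ε ^ (δ₀ / N) := Real.rpow_le_rpow_of_exponent_ge hε0 hε1 (by gcongr)
      _ = Q⁻¹ := by
        rw [hε, ← Real.rpow_mul (by positivity), div_mul_div_comm, mul_comm, div_self (by positivity), Real.rpow_one]
  refine ⟨ε, hε0, ?_⟩
  intro s t hs hst ht hd F F₁ F₂ hF₁ hF₂ hF hdis hPF hvF h1pos h2pos hsmall hint
  have ht0 : 0 < t := hs.trans hst
  -- volumes
  have hv1 : volume F₁ < ⊤ := (measure_mono (hF ▸ Set.subset_union_left)).trans_lt hvF
  have hv2 : volume F₂ < ⊤ := (measure_mono (hF ▸ Set.subset_union_right)).trans_lt hvF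
  have hvol : volume F = volume F₁ + volume F₂ := by
    rw [hF]; exact measure_union₀ hF₂.nullMeasurableSet hdis
  -- finiteness
  have h1t : ENNReal.ofReal (1 - t) ≠ 0 := by simpa using ht
  have hsub : fracPer N t F₁ + fracPer N t F₂ - fracPer N t F < ⊤ := by
    by_contra hc
    rw [not_lt, top_le_iff] at hc
    rw [hc, ENNReal.mul_top h1t, top_le_iff] at hint
    exact ENNReal.ofReal_ne_top hint
  have hsum : fracPer N t F₁ + fracPer N t F₂ < ⊤ := by
    refine lt_of_le_of_lt (le_tsub_add (b := fracPer N t F₁ + fracPer N t F₂) (a := fracPer N t F)) ?_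
    exact ENNReal.add_lt_top.2 ⟨hsub, hPF⟩
  obtain ⟨hP1, hP2⟩ := ENNReal.add_lt_top.1 hsum
  have hS1 := fin_s hF₁ s t hs hst ht hv1 hP1
  have hS2 := fin_s hF₂ s t hs hst ht hv2 hP2
  -- reals
  have A1 := H₁ F₂ t hF₂ ht0 ht h2pos hv2 hP2
  have A2 := H₂ F₂ s t hF₂ hs hst ht hd h2pos hv2 hP2
  set m := (volume F₂).toReal with hm
  set M := (volume F₁).toReal with hM
  have hm0 : 0 < m := ENNReal.toReal_pos h2pos.ne' hv2.ne
  have hM0 : 0 < M := ENNReal.toReal_pos h1pos.ne' hv1.ne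
  have hme : volume F₂ = ENNReal.ofReal m := (ENNReal.ofReal_toReal hv2.ne).symm
  have hMe : volume F₁ = ENNReal.ofReal M := (ENNReal.ofReal_toReal hv1.ne).symm
  have hmε : m ≤ ε := by
    have : volume F₂ ≤ ENNReal.ofReal ε := hsmall.trans (mul_le_of_le_one_right zero_le (min_le_left _ _))
    rw [hme] at this
    exact (ENNReal.ofReal_le_ofReal_iff hε0.le).1 this
  have hmM : m ≤ ε * M := by
    have : volume F₂ ≤ ENNReal.ofReal ε * volume F₁ := hsmall.trans (by gcongr; exact min_le_right _ _)
    rw [hme, hMe, ← ENNReal.ofReal_mul hε0.le] at this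
    exact (ENNReal.ofReal_le_ofReal_iff (by positivity)).1 this
  have hmM1 : m / M ≤ ε := by rwa [div_le_iff₀ hM0]
  -- lower bound for F₂
  set X := (1 - t) * (fracPer N t F₂).toReal with hX
  have hX0 : 0 ≤ X := mul_nonneg (by linarith) ENNReal.toReal_nonneg
  have hXpos : 0 < X := by
    rcases hX0.lt_or_eq with h | h
    · exact h
    · rw [← h, mul_zero] at A1; linarith
  have hCQ2 : C₂ * Q⁻¹ ≤ 1 / 2 := by
    rw [← div_eq_mul_inv, div_le_iff₀ hQ0]
    have : 0 < C₃ * C₁ := by positivity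
    nlinarith
  have hCQ3 : 8 * C₃ * C₁ * Q⁻¹ < 1 := by
    rw [← div_eq_mul_inv, div_lt_iff₀ hQ0]; linarith
  have hf2 : X / 2 ≤ freeEnergy N s t F₂ := by
    have hh := hεp (t - s) hd m hm0 hmε
    have : s * (fracPer N s F₂).toReal ≤ 1 / 2 * X := by
      refine A2.trans ?_
      gcongr
      refine le_trans ?_ hCQ2
      gcongr
    unfold freeEnergy
    linarith
  have hf2pos : 0 < freeEnergy N s t F₂ := by linarith
  -- F(F) ≥ F(F₁) + F(F₂)/2
  have hfF : freeEnergy N s t F₁ + freeEnergy N s t F₂ / 2 ≤ freeEnergy N s t F := by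
    have e1 := ENNReal.toReal_mono ENNReal.ofReal_ne_top hint
    rw [ENNReal.toReal_mul, ENNReal.toReal_ofReal (by linarith), ENNReal.toReal_ofReal (by linarith)] at e1
    have e2 := ENNReal.le_toReal_sub (a := fracPer N t F₁ + fracPer N t F₂) (b := fracPer N t F) hPF.ne
    rw [ENNReal.toReal_add hP1.ne hP2.ne] at e2
    have e3 : (fracPer N s F).toReal ≤ (fracPer N s F₁).toReal + (fracPer N s F₂).toReal := by
      rw [← ENNReal.toReal_add hS1.ne hS2.ne, hF]
      exact ENNReal.toReal_mono (ENNReal.add_lt_top.2 ⟨hS1, hS2⟩).ne (fracPer_union s F₁ F₂)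
    have e4 := mul_le_mul_of_nonneg_left e2 (by linarith : 0 ≤ 1 - t)
    have e5 := mul_le_mul_of_nonneg_left e3 hs.le
    have e6 := e4.trans e1
    unfold freeEnergy at e6 ⊢
    linarith
  -- ball
  obtain ⟨r, hr, hrt⟩ := H₃ (m + M) (by positivity)
  obtain ⟨hBfin, hBt⟩ := hrt t (by linarith) ht
  by_cases hball : freeEnergy N s t (Metric.ball 0 r) < freeEnergy N s t F
  · refine ⟨Metric.ball 0 r, measurableSet_ball, ?_, hBfin, hball, Or.inl ⟨0, r, rfl⟩⟩
    rw [hr, hvol, hme, hMe, ENNReal.ofReal_add hm0.le hM0.le, add_comm]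
  rw [not_lt] at hball
  set lam := (1 + m / M) ^ ((1 : ℝ) / N) with hlam
  have hb1 : 1 ≤ 1 + m / M := by have : 0 < m / M := by positivity
                                 linarith
  have hlam1 : 1 ≤ lam := Real.one_le_rpow hb1 (by positivity)
  have hlam0 : 0 < lam := by linarith
  have hlamN : lam ^ N = 1 + m / M := by
    rw [hlam, ← Real.rpow_natCast, ← Real.rpow_mul (by positivity), one_div, inv_mul_cancel₀ hNr.ne', Real.rpow_one]
  refine ⟨_, measurableSet_image lam hF₁, ?_, ?_, ?_, Or.inr rfl⟩
  · rw [vol_smul lam hlam0, hlamN, hvol, hme, hMe, ← ENNReal.ofReal_mul (by positivity),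
      ← ENNReal.ofReal_add hM0.le hm0.le]
    congr 1; field_simp
  · rw [fracPer_smul t lam hlam0 hF₁]; exact ENNReal.mul_lt_top ENNReal.ofReal_lt_top hP1
  · have hG : freeEnergy N s t ((fun x => lam • x) '' F₁) ≤ lam ^ ((N:ℝ) - t) * freeEnergy N s t F₁ := by
      unfold freeEnergy
      rw [fracPer_smul t lam hlam0 hF₁, fracPer_smul s lam hlam0 hF₁, ENNReal.toReal_mul, ENNReal.toReal_mul,
        ENNReal.toReal_ofReal (by positivity), ENNReal.toReal_ofReal (by positivity)]
      have g1 : lam ^ ((N:ℝ) - t) ≤ lam ^ ((N:ℝ) - s) :=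
        Real.rpow_le_rpow_of_exponent_le hlam1 (by linarith)
      have g2 : 0 ≤ s * (fracPer N s F₁).toReal := mul_nonneg hs.le ENNReal.toReal_nonneg
      have g3 := mul_le_mul_of_nonneg_right g1 g2
      linarith
    have hl1 : 1 ≤ lam ^ ((N:ℝ) - t) := Real.one_le_rpow hlam1 (by linarith)
    have hl2 : lam ^ ((N:ℝ) - t) ≤ 1 + m / M := by
      rw [← hlamN, ← Real.rpow_natCast]
      exact Real.rpow_le_rpow_of_exponent_le hlam1 (by linarith)
    rcases le_or_gt (freeEnergy N s t F₁) 0 with hneg | hpos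
    · have : lam ^ ((N:ℝ) - t) * freeEnergy N s t F₁ ≤ freeEnergy N s t F₁ := by nlinarith
      linarith
    · have b1 : freeEnergy N s t F₁ ≤ C₃ * (m + M) ^ (1 - t / N) := by
        have : freeEnergy N s t (Metric.ball 0 r) ≤ (1 - t) * (fracPer N t (Metric.ball 0 r)).toReal := by
          unfold freeEnergy
          have : 0 ≤ s * (fracPer N s (Metric.ball 0 r)).toReal := mul_nonneg hs.le ENNReal.toReal_nonneg
          linarith
        linarith
      have hθ : t / N ≤ 1 := by rw [div_le_one hNr]; linarith
      have hθ0 : 0 < t / N := by positivity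
      have b2 : (m + M) ^ (1 - t / N) ≤ 2 * M ^ (1 - t / N) := by
        calc (m + M) ^ (1 - t / N) ≤ (2 * M) ^ (1 - t / N) :=
              Real.rpow_le_rpow (by positivity) (by nlinarith) (by linarith)
          _ = 2 ^ (1 - t / N) * M ^ (1 - t / N) := Real.mul_rpow (by norm_num) hM0.le
          _ ≤ 2 ^ (1:ℝ) * M ^ (1 - t / N) := by
            gcongr
            · norm_num
            · linarith
          _ = _ := by rw [Real.rpow_one]
      have b3 : (m / M) * M ^ (1 - t / N) = (m / M) ^ (t / N) * m ^ (1 - t / N) := by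
        rw [Real.div_rpow hm0.le hM0.le, Real.rpow_sub hM0, Real.rpow_sub hm0, Real.rpow_one, Real.rpow_one]
        field_simp
      have b4 : m ^ (1 - t / N) ≤ C₁ * X := by
        rw [Real.rpow_sub hm0, Real.rpow_one, div_le_iff₀ (by positivity)]
        linarith
      have b5 := hεp t (by linarith) (m / M) (by positivity) hmM1
      have b6 : (m / M) * freeEnergy N s t F₁ ≤ 2 * C₃ * C₁ * Q⁻¹ * X := by
        calc (m / M) * freeEnergy N s t F₁ ≤ (m / M) * (C₃ * (2 * M ^ (1 - t / N))) := by
              gcongr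
              exact b1.trans (by gcongr)
          _ = 2 * C₃ * ((m / M) * M ^ (1 - t / N)) := by ring
          _ = 2 * C₃ * ((m / M) ^ (t / N) * m ^ (1 - t / N)) := by rw [b3]
          _ ≤ 2 * C₃ * (Q⁻¹ * (C₁ * X)) := by gcongr
          _ = _ := by ring
      have b7 : 2 * C₃ * C₁ * Q⁻¹ * X < X / 4 := by
        have := mul_lt_mul_of_pos_right hCQ3 hXpos
        linarith
      have b8 : lam ^ ((N:ℝ) - t) * freeEnergy N s t F₁ ≤ (1 + m / M) * freeEnergy N s t F₁ := by gcongr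
      linarith

end NO

/-- Non-optimality criterion. -/
theorem stmt9 (N : ℕ) (hN : 0 < N) (δ₀ : ℝ) (hδ : δ₀ ∈ Set.Ioo (0 : ℝ) 1) :
    ∃ ε : ℝ, 0 < ε ∧
      ∀ s t : ℝ, 0 < s → s < t → t < 1 → δ₀ ≤ t - s →
        ∀ F F₁ F₂ : Set (EuclideanSpace ℝ (Fin N)),
          MeasurableSet F₁ → MeasurableSet F₂ → F = F₁ ∪ F₂ →
          volume (F₁ ∩ F₂) = 0 → fracPer N t F < ⊤ → volume F < ⊤ →
          0 < volume F₁ → 0 < volume F₂ →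
          volume F₂ ≤ ENNReal.ofReal ε * min 1 (volume F₁) →
          ENNReal.ofReal (1 - t) * (fracPer N t F₁ + fracPer N t F₂ - fracPer N t F) ≤
            ENNReal.ofReal (freeEnergy N s t F₂ / 2) →
          ∃ G : Set (EuclideanSpace ℝ (Fin N)), MeasurableSet G ∧
            volume G = volume F ∧ fracPer N t G < ⊤ ∧
            freeEnergy N s t G < freeEnergy N s t F ∧
            ((∃ (z : EuclideanSpace ℝ (Fin N)) (r : ℝ), G = Metric.ball z r) ∨
              G = (fun x => ((1 + (volume F₂).toReal / (volume F₁).toReal) ^ ((1 : ℝ) / N)) • x) ''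
                F₁) := by
  exact NO.main_real N hN δ₀ hδ
end
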